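/- arXiv:1810.07327 — 3 statements merged into one kernel-verified Lean document; each statement's English description precedes it below -/
import Mathlib

section
/- Let σ ≥ 1 and γ = (σ-1)/2. For f in the Schwartz class on ℝ, define F(t,x) = ∫_ℝ |ξ|^γ e^{-it|ξ|^σ} f̂(ξ) e^{ixξ} dξ. Then sup_{x∈ℝ} ‖F(·,x)‖_{L²_t(ℝ)} ≲ ‖f‖_{L²(ℝ)}, with implicit constant depending only on σ. -/
open MeasureTheory Complex

/-- Fourier transform with the convention `f̂(ξ) = ∫ f(x) e^{-ixξ} dx`. -/
noncomputable def fourierT (f : ℝ → ℂ) (ξ : ℝ) : ℂ :=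
  ∫ x : ℝ, f x * Complex.exp (-(Complex.I * (x : ℂ) * (ξ : ℂ)))


section helpers
open scoped FourierTransform SchwartzMap ContDiff

lemma kpv_plancherel (g : ℝ → ℂ) (h1 : Integrable g) (h2 : MemLp g 2) :
    ∫ t, ‖𝓕 g t‖ ^ 2 = ∫ y, ‖g y‖ ^ 2 := by
  have hcont : Continuous (𝓕 g) :=
    VectorFourier.fourierIntegral_continuous Real.continuous_fourierChar
      (L := innerₗ ℝ) continuous_inner h1
  set G : Lp ℂ 2 (volume : Measure ℝ) := h2.toLp g with hG
  have hae : ∀ᵐ t, 𝓕 g t = (𝓕 G : Lp ℂ 2 (volume : Measure ℝ)) t := by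
    apply ae_eq_of_integral_contDiff_smul_eq hcont.locallyIntegrable
      ((Lp.memLp _).locallyIntegrable (by norm_num))
    intro φ hφ hc
    have hg₁ : HasCompactSupport (Complex.ofRealCLM ∘ φ) := hc.comp_left rfl
    have hg₂ : ContDiff ℝ ∞ (Complex.ofRealCLM ∘ φ) := by fun_prop
    set ψ : 𝓢(ℝ, ℂ) := hg₁.toSchwartzMap hg₂ with hψ
    have e1 : ∫ t, φ t • 𝓕 g t = ∫ t, ψ t • 𝓕 g t := by simp [hψ]
    have e2 : ∫ t, φ t • (𝓕 G : Lp ℂ 2 (volume : Measure ℝ)) t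
        = ∫ t, ψ t • (𝓕 G : Lp ℂ 2 (volume : Measure ℝ)) t := by simp [hψ]
    have e3 : ∫ t, (𝓕 ψ) t • g t = ∫ t, ψ t • 𝓕 g t := by
      rw [SchwartzMap.fourier_coe]
      simpa using! VectorFourier.integral_fourierIntegral_smul_eq_flip (L := innerₗ ℝ)
        Real.continuous_fourierChar continuous_inner ψ.integrable h1
    have e4 := congrArg (fun T : TemperedDistribution ℝ ℂ => T ψ)
      (Lp.fourier_toTemperedDistribution_eq G)
    simp only [TemperedDistribution.fourier_apply, Lp.toTemperedDistribution_apply] at e4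
    rw [e1, e2, ← e3, ← e4]
    apply integral_congr_ae
    filter_upwards [h2.coeFn_toLp] with x hx
    rw [hG, hx]
  have hn : ∀ H : Lp ℂ 2 (volume : Measure ℝ), ∫ t, ‖H t‖ ^ 2 = ‖H‖ ^ 2 := by
    intro H
    have h := L2.inner_def (𝕜 := ℂ) H H
    rw [inner_self_eq_norm_sq_to_K] at h
    have h' : ∀ a, inner ℂ (H a) (H a) = (((‖H a‖ ^ 2 : ℝ)) : ℂ) := by
      intro a; rw [inner_self_eq_norm_sq_to_K]; simp
    simp_rw [h'] at h
    rw [integral_complex_ofReal] at h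
    have h3 : ((‖H‖ ^ 2 : ℝ) : ℂ) = ((∫ a, ‖H a‖ ^ 2 : ℝ) : ℂ) := by
      rw [← h]; simp
    exact (Complex.ofReal_injective h3).symm
  calc ∫ t, ‖𝓕 g t‖ ^ 2 = ∫ t, ‖(𝓕 G : Lp ℂ 2 (volume : Measure ℝ)) t‖ ^ 2 := by
        apply integral_congr_ae
        filter_upwards [hae] with t ht
        rw [ht]
    _ = ‖G‖ ^ 2 := by rw [hn, Lp.norm_fourier_eq]
    _ = ∫ y, ‖g y‖ ^ 2 := by
        rw [← hn]
        apply integral_congr_ae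
        filter_upwards [h2.coeFn_toLp] with t ht
        rw [hG, ht]

lemma kpv_fourier (g : ℝ → ℂ) (t : ℝ) :
    fourierT g t = 𝓕 g (t / (2 * Real.pi)) := by
  rw [fourierT, Real.fourier_real_eq_integral_exp_smul]
  congr 1
  ext y
  rw [smul_eq_mul, mul_comm]
  congr 2
  have : (Real.pi : ℂ) ≠ 0 := by exact_mod_cast Real.pi_ne_zero
  push_cast
  field_simp

lemma kpv_plancherel' (g : ℝ → ℂ) (h1 : Integrable g) (h2 : MemLp g 2) :
    ∫ t, ‖fourierT g t‖ ^ 2 = 2 * Real.pi * ∫ y, ‖g y‖ ^ 2 := by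
  simp_rw [kpv_fourier]
  rw [Measure.integral_comp_div (fun t => ‖𝓕 g t‖ ^ 2), kpv_plancherel g h1 h2,
    abs_of_pos Real.two_pi_pos, smul_eq_mul]

lemma kpv_half (σ : ℝ) (hσ : 1 ≤ σ) (k : ℝ → ℂ) 
    (hk2 : IntegrableOn (fun ξ => ‖k ξ‖ ^ 2) (Set.Ioi 0))
    (hk1 : IntegrableOn (fun ξ => ((ξ ^ ((σ - 1) / 2) : ℝ) : ℂ) * k ξ) (Set.Ioi 0)) :
    ∫ t : ℝ, ‖∫ ξ in Set.Ioi (0:ℝ), ((ξ ^ ((σ - 1) / 2) : ℝ) : ℂ)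
            * Complex.exp (-(Complex.I * (t : ℂ) * ((ξ ^ σ : ℝ) : ℂ))) * k ξ‖ ^ 2
      = 2 * Real.pi * (σ⁻¹ * ∫ ξ in Set.Ioi (0:ℝ), ‖k ξ‖ ^ 2) := by
  have hσ0 : 0 < σ := by linarith
  have hp : σ⁻¹ ≠ 0 := (inv_pos.2 hσ0).ne'
  set B : ℝ → ℂ := fun ξ => ((ξ ^ ((σ - 1) / 2) : ℝ) : ℂ) * k ξ with hB
  set g₀ : ℝ → ℂ := fun y => (|σ⁻¹| * y ^ (σ⁻¹ - 1)) • B (y ^ σ⁻¹) with hg₀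
  set g : ℝ → ℂ := (Set.Ioi 0).indicator g₀ with hg
  have h1' : IntegrableOn g₀ (Set.Ioi 0) := (integrableOn_Ioi_comp_rpow_iff B hp).2 hk1
  have h1 : Integrable g := h1'.integrable_indicator measurableSet_Ioi
  have hsq : ∀ y ∈ Set.Ioi (0:ℝ), ‖g₀ y‖ ^ 2 =
      (|σ⁻¹| * y ^ (σ⁻¹ - 1)) • (fun ξ => σ⁻¹ * ‖k ξ‖ ^ 2) (y ^ σ⁻¹) := by
    intro y hy
    have hy : 0 < y := hy
    have e : y ^ (σ⁻¹ - 1) * ((y ^ σ⁻¹) ^ ((σ - 1) / 2)) ^ 2 = 1 := by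
      rw [← Real.rpow_natCast, ← Real.rpow_mul hy.le, ← Real.rpow_mul hy.le, ← Real.rpow_add hy]
      have : σ⁻¹ - 1 + σ⁻¹ * ((σ - 1) / 2) * (2:ℕ) = 0 := by
        push_cast; field_simp; ring
      rw [this, Real.rpow_zero]
    have p1 : 0 < y ^ (σ⁻¹ - 1) := by positivity
    have p2 : 0 < (y ^ σ⁻¹) ^ ((σ - 1) / 2) := by positivity
    have p3 : 0 < σ⁻¹ := by positivity
    simp only [hg₀, hB, norm_smul, norm_mul, Complex.norm_real, Real.norm_eq_abs, abs_abs,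
      abs_of_pos p1, abs_of_pos p2, abs_of_pos p3, smul_eq_mul]
    linear_combination (σ⁻¹ ^ 2 * ‖k (y ^ σ⁻¹)‖ ^ 2 * y ^ (σ⁻¹ - 1)) * e
  have hgn : (fun y => ‖g y‖ ^ 2) = (Set.Ioi 0).indicator (fun y => ‖g₀ y‖ ^ 2) := by
    ext y
    by_cases hy : y ∈ Set.Ioi (0:ℝ)
    · simp only [hg, Set.indicator_of_mem hy]
    · simp [hg, Set.indicator_of_notMem hy]
  have h2 : MemLp g 2 := by
    rw [memLp_two_iff_integrable_sq_norm h1.aestronglyMeasurable, hgn,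
      integrable_indicator_iff measurableSet_Ioi, integrableOn_congr_fun hsq measurableSet_Ioi,
      integrableOn_Ioi_comp_rpow_iff (fun ξ => σ⁻¹ * ‖k ξ‖ ^ 2) hp]
    exact hk2.const_mul _
  have hI : ∫ y, ‖g y‖ ^ 2 = σ⁻¹ * ∫ ξ in Set.Ioi (0:ℝ), ‖k ξ‖ ^ 2 := by
    rw [hgn, integral_indicator measurableSet_Ioi, setIntegral_congr_fun measurableSet_Ioi hsq,
      integral_comp_rpow_Ioi (fun ξ => σ⁻¹ * ‖k ξ‖ ^ 2) hp, integral_const_mul]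
  rw [← hI, ← kpv_plancherel' g h1 h2]
  congr 1
  ext t
  congr 2
  rw [← integral_comp_rpow_Ioi _ hp, fourierT, ← integral_indicator measurableSet_Ioi]
  congr 1
  ext y
  by_cases hy : y ∈ Set.Ioi (0:ℝ)
  · simp only [hg, Set.indicator_of_mem hy, hg₀, hB]
    have : (y ^ σ⁻¹) ^ σ = y := Real.rpow_inv_rpow (le_of_lt hy) hσ0.ne'
    rw [this]
    have : Complex.I * (t:ℂ) * y = Complex.I * y * t := by ring
    rw [this]
    simp only [Complex.real_smul]
    ring
  · simp only [hg, Set.indicator_of_notMem hy, zero_mul]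

lemma kpv_core (σ : ℝ) (hσ : 1 ≤ σ) (u : ℝ → ℂ) (hu : Continuous u)
    (hu2 : Integrable (fun ξ => ‖u ξ‖ ^ 2)) :
    ∫ t : ℝ, ‖∫ ξ : ℝ, ((|ξ| ^ ((σ - 1) / 2) : ℝ) : ℂ)
            * Complex.exp (-(Complex.I * (t : ℂ) * ((|ξ| ^ σ : ℝ) : ℂ))) * u ξ‖ ^ 2
      ≤ 4 * Real.pi * ∫ ξ, ‖u ξ‖ ^ 2 := by
  have hσ0 : 0 < σ := by linarith
  have hnn : 0 ≤ ∫ ξ, ‖u ξ‖ ^ 2 := integral_nonneg fun _ => by positivity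
  have hc1 : Continuous (fun ξ : ℝ => |ξ| ^ ((σ - 1) / 2)) :=
    continuous_abs.rpow_const (fun _ => Or.inr (by linarith))
  have hc2 : Continuous (fun ξ : ℝ => |ξ| ^ σ) :=
    continuous_abs.rpow_const (fun _ => Or.inr (by linarith))
  set W : ℝ → ℝ → ℂ := fun t ξ => ((|ξ| ^ ((σ - 1) / 2) : ℝ) : ℂ)
            * Complex.exp (-(Complex.I * (t : ℂ) * ((|ξ| ^ σ : ℝ) : ℂ))) * u ξ with hW
  change ∫ t : ℝ, ‖∫ ξ : ℝ, W t ξ‖ ^ 2 ≤ _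
  have hWc : ∀ t, Continuous (W t) := by
    intro t
    simp only [hW]
    fun_prop
  have hWn : ∀ t ξ, ‖W t ξ‖ = ‖((|ξ| ^ ((σ - 1) / 2) : ℝ) : ℂ) * u ξ‖ := by
    intro t ξ
    have : ‖Complex.exp (-(Complex.I * (t : ℂ) * ((|ξ| ^ σ : ℝ) : ℂ)))‖ = 1 := by
      have := Complex.norm_exp_ofReal_mul_I (-(t * |ξ| ^ σ))
      rw [← this]; congr 2; push_cast; ring
    simp only [hW, norm_mul, this, mul_one]
  by_cases hint : Integrable (fun ξ => ((|ξ| ^ ((σ - 1) / 2) : ℝ) : ℂ) * u ξ)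
  swap
  · have : ∀ t, ∫ ξ, W t ξ = 0 := by
      intro t
      apply integral_undef
      intro h
      apply hint
      refine h.congr' (by fun_prop) (Filter.Eventually.of_forall (hWn t))
    simp only [this]
    simp
    positivity
  have hWi : ∀ t, Integrable (W t) := fun t =>
    hint.congr' (hWc t).aestronglyMeasurable (Filter.Eventually.of_forall fun ξ => (hWn t ξ).symm)
  set k : ℝ → ℂ := fun ξ => u ξ + u (-ξ) with hk
  have hsplit : ∀ v : ℝ → ℂ, Integrable v →
      ∫ ξ, v ξ = ∫ ξ in Set.Ioi (0:ℝ), (v ξ + v (-ξ)) := by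
    intro v hv
    rw [integral_add hv.integrableOn hv.comp_neg.integrableOn, integral_comp_neg_Ioi, neg_zero,
      add_comm, ← integral_add_compl (measurableSet_Iic (a := (0:ℝ))) hv, Set.compl_Iic]
  have hsplitR : ∀ v : ℝ → ℝ, Integrable v →
      ∫ ξ, v ξ = ∫ ξ in Set.Ioi (0:ℝ), (v ξ + v (-ξ)) := by
    intro v hv
    rw [integral_add hv.integrableOn hv.comp_neg.integrableOn, integral_comp_neg_Ioi, neg_zero,
      add_comm, ← integral_add_compl (measurableSet_Iic (a := (0:ℝ))) hv, Set.compl_Iic]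
  have hkle : ∀ ξ, ‖k ξ‖ ^ 2 ≤ 2 * (‖u ξ‖ ^ 2 + ‖u (-ξ)‖ ^ 2) := by
    intro ξ
    have h := norm_add_le (u ξ) (u (-ξ))
    have h0 := norm_nonneg (u ξ + u (-ξ))
    simp only [hk]
    nlinarith [sq_nonneg (‖u ξ‖ - ‖u (-ξ)‖)]
  have hbi : Integrable (fun ξ => 2 * (‖u ξ‖ ^ 2 + ‖u (-ξ)‖ ^ 2)) :=
    (hu2.add hu2.comp_neg).const_mul 2
  have hk2 : Integrable (fun ξ => ‖k ξ‖ ^ 2) := by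
    refine hbi.mono' (by fun_prop) (Filter.Eventually.of_forall fun ξ => ?_)
    rw [Real.norm_of_nonneg (by positivity)]
    exact hkle ξ
  have hk1 : IntegrableOn (fun ξ => ((ξ ^ ((σ - 1) / 2) : ℝ) : ℂ) * k ξ) (Set.Ioi 0) := by
    have := (hint.add hint.comp_neg).integrableOn (s := Set.Ioi 0)
    refine this.congr_fun (fun ξ hξ => ?_) measurableSet_Ioi
    have hξ : 0 < ξ := hξ
    simp only [Pi.add_apply, abs_neg, abs_of_pos hξ, hk]
    ring
  have key := kpv_half σ hσ k hk2.integrableOn hk1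
  have hEq : ∀ t, ∫ ξ, W t ξ = ∫ ξ in Set.Ioi (0:ℝ), ((ξ ^ ((σ - 1) / 2) : ℝ) : ℂ)
            * Complex.exp (-(Complex.I * (t : ℂ) * ((ξ ^ σ : ℝ) : ℂ))) * k ξ := by
    intro t
    rw [hsplit _ (hWi t)]
    refine setIntegral_congr_fun measurableSet_Ioi fun ξ hξ => ?_
    have hξ : 0 < ξ := hξ
    simp only [hW, abs_neg, abs_of_pos hξ, hk]
    ring
  simp only [hEq]
  rw [key]
  have hb : ∫ ξ in Set.Ioi (0:ℝ), ‖k ξ‖ ^ 2 ≤ 2 * ∫ ξ, ‖u ξ‖ ^ 2 := by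
    rw [hsplitR _ hu2, ← integral_const_mul]
    exact setIntegral_mono hk2.integrableOn hbi.integrableOn hkle
  have hb0 : 0 ≤ ∫ ξ in Set.Ioi (0:ℝ), ‖k ξ‖ ^ 2 := integral_nonneg fun _ => by positivity
  have hinv : σ⁻¹ ≤ 1 := inv_le_one_of_one_le₀ hσ
  have h3 : σ⁻¹ * ∫ ξ in Set.Ioi (0:ℝ), ‖k ξ‖ ^ 2 ≤ 2 * ∫ ξ, ‖u ξ‖ ^ 2 :=
    (mul_le_of_le_one_left hb0 hinv).trans hb
  nlinarith [Real.pi_pos]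

end helpers

/-- Kenig–Ponce–Vega local smoothing: for `σ ≥ 1`, `γ = (σ-1)/2`,
`sup_x ‖F(·,x)‖_{L²_t} ≲ ‖f‖_{L²}`. -/
theorem stmt0 (σ : ℝ) (hσ : 1 ≤ σ) :
    ∃ C : ℝ, 0 < C ∧ ∀ f : SchwartzMap ℝ ℂ, ∀ x : ℝ,
      (∫ t : ℝ, ‖∫ ξ : ℝ, ((|ξ| ^ ((σ - 1) / 2) : ℝ) : ℂ)
            * Complex.exp (-(Complex.I * (t : ℂ) * ((|ξ| ^ σ : ℝ) : ℂ)))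
            * fourierT (fun y => f y) ξ
            * Complex.exp (Complex.I * (x : ℂ) * (ξ : ℂ))‖ ^ 2) ^ ((1:ℝ)/2)
        ≤ C * (∫ y : ℝ, ‖f y‖ ^ 2) ^ ((1:ℝ)/2) := by
  have hpi := Real.pi_pos
  refine ⟨(8 * Real.pi ^ 2) ^ ((1:ℝ)/2), by positivity, fun f x => ?_⟩
  have hfn : 0 ≤ ∫ y : ℝ, ‖f y‖ ^ 2 := integral_nonneg fun _ => by positivity
  rw [← Real.mul_rpow (by positivity) hfn]
  refine Real.rpow_le_rpow (integral_nonneg fun _ => by positivity) ?_ (by norm_num)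
  have hfc : Continuous (fun ξ => fourierT (fun y => f y) ξ) := by
    have : (fun ξ => fourierT (fun y => f y) ξ)
        = fun ξ => (FourierTransform.fourier f : SchwartzMap ℝ ℂ) (ξ / (2 * Real.pi)) := by
      ext ξ; rw [kpv_fourier, SchwartzMap.fourier_coe]
    rw [this]
    exact (SchwartzMap.continuous _).comp (continuous_id.div_const _)
  have hn : ∀ ξ : ℝ, ‖fourierT (fun y => f y) ξ * Complex.exp (Complex.I * (x : ℂ) * (ξ : ℂ))‖
      = ‖fourierT (fun y => f y) ξ‖ := by
    intro ξ
    have : ‖Complex.exp (Complex.I * (x : ℂ) * (ξ : ℂ))‖ = 1 := by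
      have := Complex.norm_exp_ofReal_mul_I (x * ξ)
      rw [← this]; congr 2; push_cast; ring
    rw [norm_mul, this, mul_one]
  have hi : Integrable (fun ξ => ‖fourierT (fun y => f y) ξ‖ ^ 2) := by
    have h := ((FourierTransform.fourier f : SchwartzMap ℝ ℂ).memLp 2
      (volume : Measure ℝ)).integrable_norm_pow (by norm_num)
    have h' := h.comp_div Real.two_pi_pos.ne'
    refine h'.congr (Filter.Eventually.of_forall fun ξ => ?_)
    simp only [kpv_fourier, SchwartzMap.fourier_coe]
  have hcore := kpv_core σ hσ
    (fun ξ => fourierT (fun y => f y) ξ * Complex.exp (Complex.I * (x : ℂ) * (ξ : ℂ)))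
    (by fun_prop) (by simpa only [hn] using hi)
  simp only [hn, ← mul_assoc] at hcore
  have hpl : ∫ ξ, ‖fourierT (fun y => f y) ξ‖ ^ 2 = 2 * Real.pi * ∫ y, ‖f y‖ ^ 2 :=
    kpv_plancherel' (fun y => f y) f.integrable (f.memLp 2 _)
  rw [hpl] at hcore
  refine hcore.trans (le_of_eq ?_)
  ring
end

section
/- Let σ > 1, p ≥ 2 with p = 2/(1-2s) and 1/4 ≤ s < 1/2, and let e^{-it|∇|^σ} denote the Fourier multiplier with symbol e^{-it|ξ|^σ}. Then for Schwartz f, ‖ sup_{t∈ℝ} |e^{-it|∇|^σ} f| ‖_{L^p_x(ℝ)} ≲ ‖ |∇|^s f ‖_{L²(ℝ)}. -/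
open MeasureTheory Complex ENNReal

lemma vdc {a b l : ℝ} (hab : a ≤ b) (hl : 0 < l) (φ w w' ψ ψ' : ℝ → ℝ) (ε : ℝ)
    (hε1 : |ε| ≤ 1)
    (hφ : ∀ x ∈ Set.Icc a b, HasDerivAt φ (w x) x)
    (hw : ∀ x ∈ Set.Icc a b, HasDerivAt w (w' x) x)
    (hψ : ∀ x ∈ Set.Icc a b, HasDerivAt ψ (ψ' x) x)
    (hwc : ContinuousOn w' (Set.Icc a b)) (hψc : ContinuousOn ψ' (Set.Icc a b))
    (hε : ∀ x ∈ Set.Icc a b, |w' x| = ε * w' x)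
    (hψ0 : ∀ x ∈ Set.Icc a b, 0 ≤ ψ x) (hψ' : ∀ x ∈ Set.Icc a b, ψ' x ≤ 0)
    (hwl : ∀ x ∈ Set.Icc a b, l ≤ |w x|) :
    ‖∫ x in a..b, (ψ x : ℂ) * cexp (I * (φ x : ℂ))‖ ≤ 5 * ψ a / l := by
  have hw0 : ∀ x ∈ Set.Icc a b, w x ≠ 0 := fun x hx h => by
    have := hwl x hx; rw [h, abs_zero] at this; linarith
  have hφC : ContinuousOn φ (Set.Icc a b) := fun x hx => (hφ x hx).continuousAt.continuousWithinAt
  have hwC : ContinuousOn w (Set.Icc a b) := fun x hx => (hw x hx).continuousAt.continuousWithinAt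
  have hψC : ContinuousOn ψ (Set.Icc a b) := fun x hx => (hψ x hx).continuousAt.continuousWithinAt
  have hu : Set.uIcc a b = Set.Icc a b := Set.uIcc_of_le hab
  have ha : a ∈ Set.Icc a b := ⟨le_refl _, hab⟩
  have hb : b ∈ Set.Icc a b := ⟨hab, le_refl _⟩
  -- ψ antitone
  have hanti : AntitoneOn ψ (Set.Icc a b) := by
    apply antitoneOn_of_deriv_nonpos (convex_Icc a b) hψC
    · intro x hx; rw [interior_Icc] at hx
      exact (hψ x ⟨hx.1.le, hx.2.le⟩).differentiableAt.differentiableWithinAt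
    · intro x hx; rw [interior_Icc] at hx
      rw [(hψ x ⟨hx.1.le, hx.2.le⟩).deriv]; exact hψ' x ⟨hx.1.le, hx.2.le⟩
  have hψa : ∀ x ∈ Set.Icc a b, ψ x ≤ ψ a := fun x hx => hanti ha hx hx.1
  -- derivative of v = ψ / w
  let V' : ℝ → ℝ := fun x => (ψ' x * w x - ψ x * w' x) / (w x)^2
  have hV : ∀ x ∈ Set.Icc a b, HasDerivAt (fun x => ψ x / w x) (V' x) x :=
    fun x hx => (hψ x hx).div (hw x hx) (hw0 x hx)
  have hV'C : ContinuousOn V' (Set.Icc a b) :=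
    ((hψc.mul hwC).sub (hψC.mul hwc)).div (hwC.pow 2) (fun x hx => pow_ne_zero 2 (hw0 x hx))
  have hE : ∀ x ∈ Set.Icc a b, HasDerivAt (fun x => cexp (I * (φ x : ℂ)))
      (cexp (I * (φ x : ℂ)) * (I * (w x : ℂ))) x := fun x hx =>
    (((hφ x hx).ofReal_comp).const_mul I).cexp
  have hEC : ContinuousOn (fun x => cexp (I * (φ x : ℂ))) (Set.Icc a b) :=
    fun x hx => (hE x hx).continuousAt.continuousWithinAt
  have hVc : ∀ x ∈ Set.Icc a b, HasDerivAt (fun x => (-I) * ((ψ x / w x : ℝ) : ℂ)) ((-I) * (V' x : ℂ)) x :=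
    fun x hx => ((hV x hx).ofReal_comp).const_mul (-I)
  have hV'CC : ContinuousOn (fun x => (-I) * (V' x : ℂ)) (Set.Icc a b) :=
    continuousOn_const.mul (Complex.continuous_ofReal.comp_continuousOn hV'C)
  have ibp := intervalIntegral.integral_mul_deriv_eq_deriv_mul (a := a) (b := b)
    (u := fun x => (-I) * ((ψ x / w x : ℝ) : ℂ)) (v := fun x => cexp (I * (φ x : ℂ)))
    (u' := fun x => (-I) * (V' x : ℂ)) (v' := fun x => cexp (I * (φ x : ℂ)) * (I * (w x : ℂ)))
    (by rw [hu]; exact hVc) (by rw [hu]; exact hE)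
    (by apply ContinuousOn.intervalIntegrable; rw [hu]; exact hV'CC)
    (by apply ContinuousOn.intervalIntegrable; rw [hu]
        exact hEC.mul (continuousOn_const.mul (Complex.continuous_ofReal.comp_continuousOn hwC)))
  have e1 : ∫ x in a..b, (ψ x : ℂ) * cexp (I * (φ x : ℂ)) =
      ∫ x in a..b, (-I) * ((ψ x / w x : ℝ) : ℂ) * (cexp (I * (φ x : ℂ)) * (I * (w x : ℂ))) := by
    apply intervalIntegral.integral_congr
    intro x hx
    rw [hu] at hx
    have h0 : (w x : ℂ) ≠ 0 := by exact_mod_cast hw0 x hx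
    simp only [Complex.ofReal_div]
    field_simp
    ring_nf
    simp
  rw [e1, ibp]
  have nE : ∀ x, ‖cexp (I * (φ x : ℂ))‖ = 1 := fun x => by
    rw [mul_comm]; exact Complex.norm_exp_ofReal_mul_I _
  have bV : ∀ x ∈ Set.Icc a b, ‖(-I) * ((ψ x / w x : ℝ) : ℂ) * cexp (I * (φ x : ℂ))‖ ≤ ψ a / l := by
    intro x hx
    rw [norm_mul, nE, norm_mul, norm_neg, Complex.norm_I, one_mul, mul_one, Complex.norm_real,
      Real.norm_eq_abs, abs_div, abs_of_nonneg (hψ0 x hx)]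
    exact div_le_div₀ (hψ0 a ha) (hψa x hx) hl (hwl x hx)
  have hψa0 := hψ0 a ha
  -- integral bound
  let B : ℝ → ℝ := fun x => -ψ' x / l + ψ a * (ε * (w' x / (w x)^2))
  have hBC : ContinuousOn B (Set.Icc a b) :=
    (hψc.neg.div_const l).add (continuousOn_const.mul (continuousOn_const.mul
      (hwc.div (hwC.pow 2) (fun x hx => pow_ne_zero 2 (hw0 x hx)))))
  have bI : ‖∫ x in a..b, (-I) * (V' x : ℂ) * cexp (I * (φ x : ℂ))‖ ≤ ∫ x in a..b, B x := by
    apply intervalIntegral.norm_integral_le_of_norm_le hab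
    · refine Filter.Eventually.of_forall fun x hx => ?_
      have hx' : x ∈ Set.Icc a b := ⟨hx.1.le, hx.2⟩
      rw [norm_mul, nE, norm_mul, norm_neg, Complex.norm_I, one_mul, mul_one, Complex.norm_real,
        Real.norm_eq_abs]
      have hwx := hwl x hx'
      have hpos : 0 < |w x| := lt_of_lt_of_le hl hwx
      have hV'e : V' x = ψ' x / w x - ψ x * (w' x / (w x)^2) := by
        have := hw0 x hx'
        simp only [V']; field_simp
      rw [hV'e]
      refine (abs_sub _ _).trans ?_
      refine add_le_add ?_ ?_
      · rw [abs_div, abs_of_nonpos (hψ' x hx')]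
        exact div_le_div_of_nonneg_left (by linarith [hψ' x hx']) hl hwx
      · rw [abs_mul, abs_of_nonneg (hψ0 x hx'), abs_div, abs_of_nonneg (sq_nonneg (w x)), hε x hx', mul_div_assoc]
        apply mul_le_mul_of_nonneg_right (hψa x hx')
        rw [← mul_div_assoc, ← hε x hx']; positivity
    · apply ContinuousOn.intervalIntegrable; rw [hu]; exact hBC
  have iB : ∫ x in a..b, B x = (-ψ b / l + ψ a * (ε * (-(w b)⁻¹))) - (-ψ a / l + ψ a * (ε * (-(w a)⁻¹))) := by
    apply intervalIntegral.integral_eq_sub_of_hasDerivAt (f := fun x => -ψ x / l + ψ a * (ε * (-(w x)⁻¹)))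
    · rw [hu]; intro x hx
      have h2 := (((hψ x hx).neg.div_const l).add (((((hw x hx).inv (hw0 x hx)).neg).const_mul ε).const_mul (ψ a)))
      refine h2.congr_deriv ?_
      simp only [B]; ring
    · apply ContinuousOn.intervalIntegrable; rw [hu]; exact hBC
  have iw : ∀ x ∈ Set.Icc a b, |ε * (w x)⁻¹| ≤ 1 / l := by
    intro x hx
    rw [abs_mul, abs_inv, one_div]
    calc |ε| * |w x|⁻¹ ≤ 1 * l⁻¹ := by
          apply mul_le_mul hε1 _ (by positivity) zero_le_one
          exact inv_anti₀ hl (hwl x hx)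
      _ = l⁻¹ := one_mul _
  have iB2 : ∫ x in a..b, B x ≤ 3 * ψ a / l := by
    rw [iB]
    have h1 := abs_le.1 (iw a ha)
    have h2 := abs_le.1 (iw b hb)
    have h3 : 0 ≤ ψ b / l := div_nonneg (hψ0 b hb) hl.le
    have h4 : ψ a * (ε * (w a)⁻¹) ≤ ψ a * (1 / l) := mul_le_mul_of_nonneg_left h1.2 hψa0
    have h5 : ψ a * (-(1 / l)) ≤ ψ a * (ε * (w b)⁻¹) := mul_le_mul_of_nonneg_left h2.1 hψa0
    have e : 3 * ψ a / l = ψ a / l + 2 * (ψ a * (1/l)) := by ring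
    rw [e]
    have e2 : -ψ b / l = -(ψ b / l) := by ring
    have e3 : -ψ a / l = -(ψ a / l) := by ring
    rw [e2, e3]
    linarith
  refine (norm_sub_le _ _).trans ?_
  refine (add_le_add (norm_sub_le _ _) bI).trans ?_
  have := bV a ha
  have := bV b hb
  have e : 5 * ψ a / l = ψ a / l + ψ a / l + 3 * ψ a / l := by ring
  rw [e]
  linarith


def BdOn (F : ℝ → ℂ) (S : Set ℝ) (M : ℝ) : Prop :=
  ∀ a b, a ∈ S → b ∈ S → a ≤ b → ‖∫ x in a..b, F x‖ ≤ M

lemma BdOn.combine {F : ℝ → ℂ} {A B M1 M2 : ℝ} (hAB : A ≤ B)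
    (hF : ∀ a b, A ≤ a → a ≤ b → IntervalIntegrable F volume a b)
    (h1 : BdOn F (Set.Icc A B) M1) (h2 : BdOn F (Set.Ici B) M2) :
    BdOn F (Set.Ici A) (M1 + M2) := by
  have n1 : 0 ≤ M1 := (norm_nonneg _).trans (h1 A A ⟨le_refl _, hAB⟩ ⟨le_refl _, hAB⟩ le_rfl)
  have n2 : 0 ≤ M2 := (norm_nonneg _).trans (h2 B B (Set.mem_Ici.2 le_rfl) (Set.mem_Ici.2 le_rfl) le_rfl)
  intro a b ha hb hab
  simp only [Set.mem_Ici] at ha hb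
  rcases le_total b B with h | h
  · linarith [h1 a b ⟨ha, hab.trans h⟩ ⟨hb, h⟩ hab]
  · rcases le_total B a with h' | h'
    · linarith [h2 a b h' h hab]
    · rw [← intervalIntegral.integral_add_adjacent_intervals (hF a B ha h') (hF B b hAB h)]
      refine (norm_add_le _ _).trans (add_le_add (h1 _ _ ⟨ha, h'⟩ ⟨hAB, le_rfl⟩ h') (h2 _ _ (Set.mem_Ici.2 le_rfl) h h))

noncomputable def Fo (α σ t : ℝ) (η : ℝ) : ℂ :=
  ((η ^ (-α) : ℝ) : ℂ) * cexp (I * ((η - t * η ^ σ : ℝ) : ℂ))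

lemma norm_Fo (α σ t η : ℝ) (h : 0 ≤ η) : ‖Fo α σ t η‖ = η ^ (-α) := by
  rw [Fo, norm_mul, mul_comm I, Complex.norm_exp_ofReal_mul_I, mul_one, Complex.norm_real,
    Real.norm_of_nonneg (Real.rpow_nonneg h _)]

lemma Fo_int (α σ t : ℝ) (hα : α < 1) (a b : ℝ) (ha : 0 ≤ a) (hab : a ≤ b) :
    IntervalIntegrable (Fo α σ t) volume a b := by
  have h := intervalIntegral.intervalIntegrable_rpow' (a := a) (b := b) (r := -α) (by linarith)
  refine h.mono_fun ?_ ?_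
  · apply Measurable.aestronglyMeasurable
    unfold Fo; fun_prop
  · rw [Set.uIoc_of_le hab]
    filter_upwards [ae_restrict_mem measurableSet_Ioc] with x hx
    rw [norm_Fo _ _ _ _ (ha.trans hx.1.le)]
    exact le_abs_self _

lemma Fo_region (α σ t : ℝ) (hα : 0 ≤ α) (hσ : 1 < σ) {a b l : ℝ} (ha : 0 < a) (hab : a ≤ b)
    (hl : 0 < l) (h : ∀ x ∈ Set.Icc a b, l ≤ |1 - t * σ * x ^ (σ - 1)|) :
    ‖∫ x in a..b, Fo α σ t x‖ ≤ 5 * a ^ (-α) / l := by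
  have pos : ∀ x ∈ Set.Icc a b, 0 < x := fun x hx => ha.trans_le hx.1
  have key := fun ε hε1 hε => vdc (a := a) (b := b) (l := l) hab hl (fun η => η - t * η ^ σ) (fun η => 1 - t * σ * η ^ (σ - 1))
    (fun η => -(t * σ * ((σ-1) * η ^ (σ - 1 - 1)))) (fun η => η ^ (-α)) (fun η => (-α) * η ^ (-α - 1)) ε hε1
    (fun x hx => by
      refine ((hasDerivAt_id' x).sub ((Real.hasDerivAt_rpow_const (p := σ) (Or.inl (pos x hx).ne')).const_mul t)).congr_deriv ?_
      ring)
    (fun x hx => by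
      refine ((hasDerivAt_const x (1:ℝ)).sub ((Real.hasDerivAt_rpow_const (p := σ - 1) (Or.inl (pos x hx).ne')).const_mul (t * σ))).congr_deriv ?_
      ring)
    (fun x hx => Real.hasDerivAt_rpow_const (Or.inl (pos x hx).ne'))
    (by
      refine (ContinuousOn.mul continuousOn_const (ContinuousOn.mul continuousOn_const ?_)).neg
      exact fun x hx => (Real.continuousAt_rpow_const _ _ (Or.inl (pos x hx).ne')).continuousWithinAt)
    (by
      refine ContinuousOn.mul continuousOn_const ?_
      exact fun x hx => (Real.continuousAt_rpow_const _ _ (Or.inl (pos x hx).ne')).continuousWithinAt)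
    hε
    (fun x hx => Real.rpow_nonneg (pos x hx).le _)
    (fun x hx => by
      have := Real.rpow_nonneg (pos x hx).le (-α - 1)
      nlinarith)
    h
  rcases le_total 0 t with ht | ht
  · refine key (-1) (by norm_num) (fun x hx => ?_)
    have : 0 ≤ t * σ * ((σ-1) * x ^ (σ - 1 - 1)) := by
      have := Real.rpow_nonneg (pos x hx).le (σ - 1 - 1)
      have : 0 ≤ σ - 1 := by linarith
      have : 0 ≤ σ := by linarith
      positivity
    rw [abs_of_nonpos (by linarith)]; ring
  · refine key 1 (by norm_num) (fun x hx => ?_)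
    have : 0 ≤ (-t) * σ * ((σ-1) * x ^ (σ - 1 - 1)) := by
      have := Real.rpow_nonneg (pos x hx).le (σ - 1 - 1)
      have : 0 ≤ σ - 1 := by linarith
      have : 0 ≤ σ := by linarith
      have : 0 ≤ -t := by linarith
      positivity
    rw [abs_of_nonneg (by linarith)]; ring

lemma Fo_trivial (α σ t : ℝ) (hα : α < 1) :
    BdOn (Fo α σ t) (Set.Icc 0 8) (8 ^ (1 - α) / (1 - α)) := by
  intro a b ha hb hab
  have hi := intervalIntegral.intervalIntegrable_rpow' (a := 0) (b := 8) (r := -α) (by linarith)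
  calc ‖∫ x in a..b, Fo α σ t x‖ ≤ ∫ x in a..b, x ^ (-α) := by
        apply intervalIntegral.norm_integral_le_of_norm_le hab
        · refine Filter.Eventually.of_forall fun x hx => ?_
          rw [norm_Fo _ _ _ _ (ha.1.trans hx.1.le)]
        · exact intervalIntegral.intervalIntegrable_rpow' (by linarith)
    _ ≤ ∫ x in (0:ℝ)..8, x ^ (-α) := by
        apply intervalIntegral.integral_mono_interval ha.1 hab hb.2 _ hi
        filter_upwards [ae_restrict_mem measurableSet_Ioc] with x hx
        exact Real.rpow_nonneg hx.1.le _
    _ = 8 ^ (1 - α) / (1 - α) := by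
        rw [integral_rpow (Or.inl (by linarith))]
        rw [Real.zero_rpow (by linarith)]
        rw [sub_zero]; congr 1 <;> ring_nf

lemma pow_up (κ y : ℝ) (hκ : 0 < κ) (hy : 0 ≤ y) (hy1 : y ≤ 1) :
    κ / (2 + 2 * κ) * y ≤ (1 + y) ^ κ - 1 := by
  have h1 : (0:ℝ) < 1 + y := by linarith
  rw [Real.rpow_def_of_pos h1]
  have h2 := Real.add_one_le_exp (Real.log (1 + y) * κ)
  have h3 := Real.one_sub_inv_le_log_of_pos h1
  have h4 : y / 2 ≤ 1 - (1+y)⁻¹ := by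
    have : 1 - (1+y)⁻¹ = y / (1+y) := by field_simp; ring
    rw [this]
    exact div_le_div_of_nonneg_left hy h1 (by linarith)
  have h5 : κ / (2 + 2 * κ) ≤ κ / 2 := div_le_div_of_nonneg_left hκ.le (by norm_num) (by linarith)
  have h6 : y / 2 * κ ≤ Real.log (1+y) * κ := mul_le_mul_of_nonneg_right (h4.trans h3) hκ.le
  have h7 := mul_le_mul_of_nonneg_right h5 hy
  linarith

lemma pow_down (κ y : ℝ) (hκ : 0 < κ) (hy : 0 ≤ y) (hy1 : y < 1) :
    κ / (2 + 2 * κ) * y ≤ 1 - (1 - y) ^ κ := by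
  have h1 : (0:ℝ) < 1 - y := by linarith
  rw [Real.rpow_def_of_pos h1]
  have h3 := Real.log_le_sub_one_of_pos h1
  have h2 : Real.exp (Real.log (1 - y) * κ) ≤ (Real.exp (κ * y))⁻¹ := by
    rw [← Real.exp_neg]; apply Real.exp_le_exp.2; nlinarith
  have h4 := Real.add_one_le_exp (κ * y)
  have hky : 0 ≤ κ * y := by positivity
  have h5 : (Real.exp (κ * y))⁻¹ ≤ (κ * y + 1)⁻¹ := inv_anti₀ (by linarith) h4
  have h6 : 1 - (κ * y + 1)⁻¹ = κ * y / (κ * y + 1) := by field_simp; ring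
  have h7 : κ / (2 + 2 * κ) * y ≤ κ * y / (κ * y + 1) := by
    rw [div_mul_eq_mul_div]
    exact div_le_div_of_nonneg_left hky (by linarith) (by nlinarith)
  linarith

lemma rp_half (α a r : ℝ) (hα : 1/2 ≤ α) (hr : 0 < r) (ha1 : 1 ≤ a) (har : r ^ 2 / 4 ≤ a) :
    a ^ (-α) ≤ 2 / r := by
  calc a ^ (-α) ≤ a ^ (-(1/2:ℝ)) := Real.rpow_le_rpow_of_exponent_le ha1 (by linarith)
    _ = (Real.sqrt a)⁻¹ := by rw [Real.rpow_neg (by linarith), Real.sqrt_eq_rpow]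
    _ ≤ (r/2)⁻¹ := by
        apply inv_anti₀ (by linarith)
        apply Real.le_sqrt_of_sq_le; linarith
    _ = 2 / r := by rw [inv_div]

lemma osc0 (α σ : ℝ) (hα : 1/2 ≤ α) (hα1 : α < 1) (hσ : 1 < σ) :
    ∃ C : ℝ, 0 < C ∧ ∀ t N : ℝ, 0 ≤ N → ‖∫ η in (0:ℝ)..N, Fo α σ t η‖ ≤ C := by
  set κ := σ - 1 with hκd
  have hκ : 0 < κ := by linarith
  set Z : ℝ := 8 ^ (1 - α) / (1 - α) with hZ
  have hZ0 : 0 < Z := div_pos (by positivity) (by linarith)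
  set c := κ / (2 + 2 * κ) with hc
  have hc0 : 0 < c := by positivity
  set l1 : ℝ := 1 - (1/2) ^ κ with hl1
  have hl10 : 0 < l1 := by
    have := Real.rpow_lt_one (x := 1/2) (z := κ) (by norm_num) (by norm_num) hκ
    linarith
  set l2 : ℝ := 2 ^ κ - 1 with hl2
  have hl20 : 0 < l2 := by
    have := Real.one_lt_rpow (x := 2) (z := κ) (by norm_num) hκ
    linarith
  set C := Z + 5 + 5 / l2 + 5 / l1 + 10 / c + 4 + 10 / c with hC
  have p1 : 0 < 5 / l2 := by positivity
  have p2 : 0 < 5 / l1 := by positivity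
  have p3 : 0 < 10 / c := by positivity
  refine ⟨C, by positivity, ?_⟩
  intro t N hN
  have hint := Fo_int α σ t hα1
  have hintA : ∀ A, 0 ≤ A → ∀ a b, A ≤ a → a ≤ b → IntervalIntegrable (Fo α σ t) volume a b :=
    fun A hA a b ha hab => hint a b (hA.trans ha) hab
  have htriv := Fo_trivial α σ t hα1
  have le1 : ∀ a : ℝ, 1 ≤ a → a ^ (-α) ≤ 1 := fun a ha =>
    Real.rpow_le_one_of_one_le_of_nonpos ha (by linarith)
  suffices h : ∃ M, M ≤ C ∧ BdOn (Fo α σ t) (Set.Ici 0) M by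
    obtain ⟨M, hM, h⟩ := h
    exact (h 0 N (Set.mem_Ici.2 le_rfl) hN hN).trans hM
  rcases le_or_gt t 0 with ht | ht
  · refine ⟨Z + 5, by linarith, ?_⟩
    refine BdOn.combine (B := 1) zero_le_one hint (fun a b ha hb => htriv a b ⟨ha.1, by linarith [ha.2]⟩ ⟨hb.1, by linarith [hb.2]⟩) ?_
    intro a b ha hb hab
    simp only [Set.mem_Ici] at ha hb
    refine (Fo_region α σ t (by linarith) hσ (l := 1) (by linarith) hab one_pos ?_).trans ?_
    · intro x hx
      have hx0 : 0 ≤ x ^ (σ - 1) := Real.rpow_nonneg (by linarith [hx.1]) _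
      have : 0 ≤ (-t) * σ * x ^ (σ - 1) := by
        have : 0 ≤ -t := by linarith
        have : 0 ≤ σ := by linarith
        positivity
      refine le_trans ?_ (le_abs_self _)
      linarith
    · linarith [le1 a ha]
  · -- t > 0
    have hts : 0 < t * σ := by positivity
    obtain ⟨r, hr, hrt⟩ : ∃ r : ℝ, 0 < r ∧ t * σ = ((r ^ 2) ^ κ)⁻¹ := by
      refine ⟨Real.sqrt ((t * σ)⁻¹ ^ (κ⁻¹)), by positivity, ?_⟩
      rw [Real.sq_sqrt (by positivity), Real.rpow_inv_rpow (by positivity) hκ.ne', inv_inv]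
    have hr2 : 0 < r ^ 2 := by positivity
    have hw : ∀ x, 0 ≤ x → t * σ * x ^ (σ - 1) = (x / r ^ 2) ^ κ := by
      intro x hx
      rw [Real.div_rpow hx hr2.le, hrt, ← hκd]; ring
    rcases le_or_gt r 2 with h2 | h2
    · refine ⟨Z + 5 / l2, by linarith, ?_⟩
      refine BdOn.combine (B := 8) (by norm_num) hint htriv ?_
      intro a b ha hb hab
      simp only [Set.mem_Ici] at ha hb
      refine (Fo_region α σ t (by linarith) hσ (l := l2) (by linarith) hab hl20 ?_).trans ?_
      · intro x hx
        have hx8 : 8 ≤ x := ha.trans hx.1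
        rw [hw x (by linarith)]
        have : (2:ℝ) ^ κ ≤ (x / r ^ 2) ^ κ := by
          apply Real.rpow_le_rpow (by norm_num) _ hκ.le
          rw [le_div_iff₀ hr2]; nlinarith
        rw [abs_sub_comm]
        refine le_trans ?_ (le_abs_self _)
        linarith
      · apply div_le_div_of_nonneg_right _ hl20.le
        linarith [le1 a (by linarith)]
    · refine ⟨Z + (5 / l1 + (10 / c + (4 + 10 / c))), by linarith, ?_⟩
      have q1 : 1 ≤ r ^ 2 / 2 := by nlinarith
      have q2 : r ^ 2 / 2 ≤ r ^ 2 - r := by nlinarith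
      have q3 : r ^ 2 - r ≤ r ^ 2 + r := by nlinarith
      have hri : 0 < 1 / r := by positivity
      have hri1 : 1 / r < 1 := by rw [div_lt_one hr]; linarith
      have fin : ∀ a, r ^ 2 / 2 ≤ a → 5 * a ^ (-α) / (c * (1 / r)) ≤ 10 / c := by
        intro a ha
        have := rp_half α a r hα hr (by linarith) (by linarith)
        calc 5 * a ^ (-α) / (c * (1 / r)) ≤ 5 * (2 / r) / (c * (1 / r)) := by gcongr
          _ = 10 / c := by field_simp; norm_num
      refine BdOn.combine (B := 1) zero_le_one hint (fun a b ha hb => htriv a b ⟨ha.1, by linarith [ha.2]⟩ ⟨hb.1, by linarith [hb.2]⟩) ?_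
      refine BdOn.combine q1 (hintA _ (by linarith)) ?_ ?_
      · intro a b ha hb hab
        refine (Fo_region α σ t (by linarith) hσ (l := l1) (by linarith [ha.1]) hab hl10 ?_).trans ?_
        · intro x hx
          have hx0 : 0 ≤ x := by linarith [ha.1, hx.1]
          rw [hw x hx0]
          have : (x / r ^ 2) ^ κ ≤ (1/2) ^ κ := by
            apply Real.rpow_le_rpow (by positivity) _ hκ.le
            rw [div_le_iff₀ hr2]; linarith [hx.2, hb.2]
          refine le_trans ?_ (le_abs_self _)
          linarith
        · apply div_le_div_of_nonneg_right _ hl10.le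
          linarith [le1 a (by linarith [ha.1])]
      refine BdOn.combine q2 (hintA _ (by linarith)) ?_ ?_
      · intro a b ha hb hab
        refine (Fo_region α σ t (by linarith) hσ (l := c * (1 / r)) (by linarith [ha.1]) hab (by positivity) ?_).trans (fin a ha.1)
        intro x hx
        have hx0 : 0 ≤ x := by linarith [ha.1, hx.1]
        rw [hw x hx0]
        have : (x / r ^ 2) ^ κ ≤ (1 - 1 / r) ^ κ := by
          apply Real.rpow_le_rpow (by positivity) _ hκ.le
          rw [div_le_iff₀ hr2]
          have : (1 - 1 / r) * r ^ 2 = r ^ 2 - r := by field_simp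
          rw [this]; linarith [hx.2, hb.2]
        refine le_trans ?_ (le_abs_self _)
        linarith [pow_down κ (1 / r) hκ hri.le hri1]
      refine BdOn.combine q3 (hintA _ (by linarith)) ?_ ?_
      · intro a b ha hb hab
        have : ‖∫ x in a..b, Fo α σ t x‖ ≤ 2 / r * |b - a| := by
          apply intervalIntegral.norm_integral_le_of_norm_le_const
          intro x hx
          rw [Set.uIoc_of_le hab] at hx
          have hx1 : r ^ 2 / 2 ≤ x := by linarith [ha.1, hx.1]
          rw [norm_Fo _ _ _ _ (by linarith)]
          exact rp_half α x r hα hr (by linarith) (by linarith)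
        refine this.trans ?_
        rw [abs_of_nonneg (by linarith)]
        calc 2 / r * (b - a) ≤ 2 / r * (2 * r) := by
              apply mul_le_mul_of_nonneg_left _ (by positivity)
              linarith [ha.1, hb.2]
          _ = 4 := by field_simp; norm_num
      · intro a b ha hb hab
        simp only [Set.mem_Ici] at ha hb
        refine (Fo_region α σ t (by linarith) hσ (l := c * (1 / r)) (by linarith) hab (by positivity) ?_).trans (fin a (by linarith))
        intro x hx
        have hx0 : 0 ≤ x := by linarith [hx.1]
        rw [hw x hx0]
        have : (1 + 1 / r) ^ κ ≤ (x / r ^ 2) ^ κ := by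
          apply Real.rpow_le_rpow (by positivity) _ hκ.le
          rw [le_div_iff₀ hr2]
          have : (1 + 1 / r) * r ^ 2 = r ^ 2 + r := by field_simp
          rw [this]; linarith [hx.1]
        rw [abs_sub_comm]
        refine le_trans ?_ (le_abs_self _)
        linarith [pow_up κ (1 / r) hκ hri.le hri1.le]


noncomputable def Gk (α σ x t ξ : ℝ) : ℂ :=
  ((|ξ| ^ (-α) : ℝ) : ℂ) * cexp (I * ((x * ξ - t * |ξ| ^ σ : ℝ) : ℂ))

lemma norm_Gk (α σ x t ξ : ℝ) : ‖Gk α σ x t ξ‖ = |ξ| ^ (-α) := by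
  rw [Gk, norm_mul, mul_comm I, Complex.norm_exp_ofReal_mul_I, mul_one, Complex.norm_real,
    Real.norm_of_nonneg (Real.rpow_nonneg (abs_nonneg _) _)]

lemma Gk_neg (α σ x t ξ : ℝ) : Gk α σ x t (-ξ) = Gk α σ (-x) t ξ := by
  simp [Gk, abs_neg]

lemma Gk_conj (α σ x t ξ : ℝ) : Gk α σ (-x) (-t) ξ = (starRingEnd ℂ) (Gk α σ x t ξ) := by
  rw [Gk, Gk, map_mul, Complex.conj_ofReal, ← Complex.exp_conj, map_mul, Complex.conj_I, Complex.conj_ofReal]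
  congr 2
  push_cast; ring

lemma abs_rpow_int (α : ℝ) (hα : α < 1) (N : ℝ) :
    IntegrableOn (fun ξ : ℝ => |ξ| ^ (-α)) (Set.Icc (-N) N) := by
  rcases lt_or_ge N 0 with h | h
  · rw [Set.Icc_eq_empty (by linarith)]; exact integrableOn_empty
  have h1 : IntervalIntegrable (fun ξ : ℝ => |ξ| ^ (-α)) volume 0 N := by
    have h := intervalIntegral.intervalIntegrable_rpow' (a := 0) (b := N) (r := -α) (by linarith)
    refine h.congr ?_
    rw [Set.uIoc_of_le ‹_›]
    intro x hx
    simp only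
    rw [abs_of_pos hx.1]
  have h2 : IntervalIntegrable (fun ξ : ℝ => |ξ| ^ (-α)) volume (-N) 0 := by
    have := (IntervalIntegrable.iff_comp_neg (by simp)).1 h1
    simpa using this.symm
  have := h2.trans h1
  rw [integrableOn_Icc_iff_integrableOn_Ioc]
  exact (intervalIntegrable_iff_integrableOn_Ioc_of_le (by linarith)).1 this

lemma Gk_int (α σ x t : ℝ) (hα : α < 1) (N : ℝ) : IntegrableOn (Gk α σ x t) (Set.Icc (-N) N) := by
  refine (abs_rpow_int α hα N).mono' ?_ ?_
  · apply Measurable.aestronglyMeasurable; unfold Gk; fun_prop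
  · exact Filter.Eventually.of_forall fun ξ => (norm_Gk _ _ _ _ _).le

lemma kern (α σ : ℝ) (hα : 1/2 ≤ α) (hα1 : α < 1) (hσ : 1 < σ) :
    ∃ C : ℝ, 0 < C ∧ ∀ x t N : ℝ, x ≠ 0 → 0 ≤ N →
      ‖∫ ξ in Set.Icc (-N) N, Gk α σ x t ξ‖ ≤ C * |x| ^ (-(1 - α)) := by
  obtain ⟨C, hC, h⟩ := osc0 α σ hα hα1 hσ
  have pos : ∀ x t N : ℝ, 0 < x → 0 ≤ N → ‖∫ ξ in (0:ℝ)..N, Gk α σ x t ξ‖ ≤ C * |x| ^ (-(1 - α)) := by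
    intro x t N hx hN
    have e : ∫ ξ in (0:ℝ)..N, Gk α σ x t ξ = ∫ ξ in (0:ℝ)..N, ((x ^ α : ℝ) : ℂ) * Fo α σ (t / x ^ σ) (x * ξ) := by
      apply intervalIntegral.integral_congr
      intro ξ hξ
      rw [Set.uIcc_of_le hN] at hξ
      simp only [Gk, Fo]
      rw [abs_of_nonneg hξ.1, Real.mul_rpow hx.le hξ.1, Real.mul_rpow hx.le hξ.1, ← mul_assoc, ← Complex.ofReal_mul,
        ← mul_assoc, ← Real.rpow_add hx, add_neg_cancel, Real.rpow_zero, one_mul]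
      congr 5
      have := (Real.rpow_pos_of_pos hx σ).ne'
      field_simp
    rw [e, intervalIntegral.integral_const_mul, intervalIntegral.integral_comp_mul_left _ hx.ne', norm_mul, norm_smul,
      Complex.norm_real, Real.norm_of_nonneg (by positivity), norm_inv, Real.norm_of_nonneg hx.le, abs_of_pos hx, mul_zero]
    have e2 : x ^ (-(1 - α)) = x ^ α * x⁻¹ := by
      rw [← Real.rpow_neg_one x, ← Real.rpow_add hx]; congr 1; ring
    rw [e2, ← mul_assoc, mul_comm C]
    exact mul_le_mul_of_nonneg_left (h _ _ (by positivity)) (by positivity)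
  have all : ∀ x t N : ℝ, x ≠ 0 → 0 ≤ N → ‖∫ ξ in (0:ℝ)..N, Gk α σ x t ξ‖ ≤ C * |x| ^ (-(1 - α)) := by
    intro x t N hx hN
    rcases lt_or_gt_of_ne hx with hx | hx
    · have := pos (-x) (-t) N (by linarith) hN
      rw [abs_neg] at this
      refine le_trans (le_of_eq ?_) this
      simp only [Gk_conj]
      rw [intervalIntegral.integral_of_le hN, intervalIntegral.integral_of_le hN, integral_conj, RCLike.norm_conj]
    · exact pos x t N hx hN
  refine ⟨2 * C, by positivity, ?_⟩
  intro x t N hx hN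
  have hi := Gk_int α σ x t hα1 N
  rw [integral_Icc_eq_integral_Ioc, ← intervalIntegral.integral_of_le (by linarith)]
  have ii : IntervalIntegrable (Gk α σ x t) volume (-N) N := by
    rw [intervalIntegrable_iff_integrableOn_Icc_of_le (by linarith)]; exact hi
  rw [← intervalIntegral.integral_add_adjacent_intervals (b := 0)
    (ii.mono_set (by rw [Set.uIcc_of_le (by linarith), Set.uIcc_of_le (by linarith)]; exact Set.Icc_subset_Icc le_rfl hN))
    (ii.mono_set (by rw [Set.uIcc_of_le (by linarith), Set.uIcc_of_le (by linarith)]; exact Set.Icc_subset_Icc (by linarith) le_rfl))]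
  have e : ∫ ξ in (-N)..0, Gk α σ x t ξ = ∫ ξ in (0:ℝ)..N, Gk α σ (-x) t ξ := by
    have := intervalIntegral.integral_comp_neg (a := 0) (b := N) (Gk α σ x t)
    rw [neg_zero] at this
    rw [← this]
    simp only [Gk_neg]
  rw [e]
  refine (norm_add_le _ _).trans ?_
  have h1 := all x t N hx hN
  have h2 := all (-x) t N (neg_ne_zero.2 hx) hN
  rw [abs_neg] at h2
  linarith


lemma lint_abs (φ : ℝ → ℝ≥0∞) : ∫⁻ x : ℝ, φ |x| = 2 * ∫⁻ x in Set.Ioi (0:ℝ), φ x := by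
  rw [← lintegral_add_compl _ (measurableSet_Ioi (a := (0:ℝ))), Set.compl_Ioi, two_mul]
  have h1 : ∫⁻ x in Set.Ioi (0:ℝ), φ |x| = ∫⁻ x in Set.Ioi (0:ℝ), φ x :=
    setLIntegral_congr_fun measurableSet_Ioi (fun x hx => by
      rw [abs_of_pos hx])
  have h2 : ∫⁻ x in Set.Iic (0:ℝ), φ |x| = ∫⁻ x in Set.Ioi (0:ℝ), φ x := by
    rw [← h1, setLIntegral_congr Iio_ae_eq_Iic.symm, ← lintegral_indicator measurableSet_Iio,
      ← lintegral_indicator measurableSet_Ioi, ← lintegral_neg_eq_self]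
    apply lintegral_congr
    intro x
    simp [Set.indicator_apply]
  rw [h1, h2]

noncomputable def kk (l z : ℝ) : ℝ≥0∞ := (ENNReal.ofReal |z|) ^ (-l)

lemma kk_meas (l : ℝ) : Measurable (kk l) := by unfold kk; fun_prop

lemma kk_near (l R : ℝ) (hl : 0 < l) (hl1 : l < 1) (hR : 0 < R) :
    ∫⁻ x : ℝ, (if |x| < R then kk l x else 0) = ENNReal.ofReal (2 / (1 - l) * R ^ (1 - l)) := by
  have := lint_abs (fun z => if z < R then (ENNReal.ofReal z) ^ (-l) else 0)
  simp only [kk]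
  rw [this]
  have e : ∫⁻ x in Set.Ioi (0:ℝ), (if x < R then (ENNReal.ofReal x) ^ (-l) else 0) =
      ∫⁻ x in Set.Ioc (0:ℝ) R, ENNReal.ofReal (x ^ (-l)) := by
    rw [← setLIntegral_congr (Ioo_ae_eq_Ioc (a := (0:ℝ)) (b := R)),
      ← lintegral_indicator measurableSet_Ioi, ← lintegral_indicator measurableSet_Ioo]
    apply lintegral_congr
    intro x
    by_cases h : 0 < x
    · by_cases h' : x < R
      · simp [Set.indicator_apply, h, h', ENNReal.ofReal_rpow_of_pos h]
      · simp [Set.indicator_apply, h, h']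
    · simp [Set.indicator_apply, h]
  have hi := intervalIntegral.intervalIntegrable_rpow' (a := 0) (b := R) (r := -l) (by linarith)
  rw [e, ← ofReal_integral_eq_lintegral_ofReal]
  · rw [← intervalIntegral.integral_of_le hR.le, integral_rpow (Or.inl (by linarith)),
      Real.zero_rpow (by linarith), sub_zero]
    rw [show (2:ℝ≥0∞) = ENNReal.ofReal 2 by simp, ← ENNReal.ofReal_mul (by norm_num)]
    congr 1
    rw [show -l + 1 = 1 - l by ring]; ring
  · exact (intervalIntegrable_iff_integrableOn_Ioc_of_le hR.le).1 hi
  · filter_upwards [ae_restrict_mem measurableSet_Ioc] with x hx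
    exact Real.rpow_nonneg hx.1.le _

lemma kk_far (l p R : ℝ) (hlp : l * p = 2) (hp : 0 < p) (hR : 0 < R) :
    ∫⁻ x : ℝ, (if |x| < R then 0 else kk l x) ^ p = ENNReal.ofReal (2 * R⁻¹) := by
  have := lint_abs (fun z => (if z < R then 0 else (ENNReal.ofReal z) ^ (-l)) ^ p)
  simp only [kk]
  rw [this]
  have e : ∫⁻ x in Set.Ioi (0:ℝ), (if x < R then 0 else (ENNReal.ofReal x) ^ (-l)) ^ p =
      ∫⁻ x in Set.Ioi R, ENNReal.ofReal (x ^ (-2:ℝ)) := by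
    rw [setLIntegral_congr (Ioi_ae_eq_Ici (a := R)),
      ← lintegral_indicator measurableSet_Ioi, ← lintegral_indicator measurableSet_Ici]
    apply lintegral_congr
    intro x
    by_cases h : 0 < x
    · by_cases h' : x < R
      · simp [Set.indicator_apply, h, h', hp]
      · simp only [Set.indicator_apply, Set.mem_Ioi, h, h', if_true, if_false, Set.mem_Ici, not_lt.1 h']
        rw [← ENNReal.rpow_mul, ENNReal.ofReal_rpow_of_pos h]
        congr 2; linarith
    · have : ¬ R ≤ x := by linarith
      simp [Set.indicator_apply, h, this]
  rw [e, ← ofReal_integral_eq_lintegral_ofReal]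
  · rw [integral_Ioi_rpow_of_lt (by norm_num) hR]
    rw [show (2:ℝ≥0∞) = ENNReal.ofReal 2 by simp, ← ENNReal.ofReal_mul (by norm_num)]
    congr 1
    norm_num [Real.rpow_neg_one]
  · exact integrableOn_Ioi_rpow_of_lt (by norm_num) hR
  · filter_upwards [ae_restrict_mem measurableSet_Ioi] with x hx
    exact Real.rpow_nonneg (hR.trans hx).le _

lemma inner_bd (p q S B : ℝ) (hp : 2 < p) (hpq : q.HolderConjugate p) (hS : 0 < S) (hB : 0 < B) (h : ℝ → ℝ)
    (hm : Measurable h) (h0 : ∀ x, 0 ≤ h x)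
    (hS' : ∫⁻ x, ENNReal.ofReal (h x) ^ q = ENNReal.ofReal S) (y : ℝ) :
    ∫⁻ x, (if h x ≤ B then ENNReal.ofReal (h x) else 0) * kk (2/p) (x - y) ≤
      ENNReal.ofReal ((2 / (1 - 2/p) + 2 ^ (1/p)) * (B ^ (q - 1) * S ^ (1 - 2/p))) := by
  have hp0 : 0 < p := by linarith
  have hq0 : 0 < q := hpq.pos
  have hl : 0 < 2/p := by positivity
  have hl1 : 2/p < 1 := by rw [div_lt_one hp0]; exact hp
  have hlp : 2/p * p = 2 := by field_simp
  have hqq : 1/q + 1/p = 1 := by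
    have := hpq.inv_add_inv_eq_one
    rw [one_div, one_div]; exact this
  have kkm := kk_meas (2/p)
  set R := S * B ^ (-q) with hRd
  have hR : 0 < R := by positivity
  have step : ∀ x, (if h x ≤ B then ENNReal.ofReal (h x) else 0) * kk (2/p) (x - y) ≤
      ENNReal.ofReal B * (if |x - y| < R then kk (2/p) (x-y) else 0) +
      ((fun x => ENNReal.ofReal (h x)) * (fun x => if |x - y| < R then 0 else kk (2/p) (x-y))) x := by
    intro x
    simp only [Pi.mul_apply]
    by_cases h1 : h x ≤ B
    · by_cases h2 : |x - y| < R
      · simp only [h1, h2, if_true, mul_zero, add_zero]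
        gcongr
      · simp only [h1, h2, if_true, if_false, mul_zero, zero_add]; exact le_rfl
    · simp [h1]
  refine (lintegral_mono step).trans ?_
  have mfar : Measurable (fun x => if |x - y| < R then (0:ℝ≥0∞) else kk (2/p) (x-y)) := by
    apply Measurable.ite (measurableSet_lt (by fun_prop) (by fun_prop)) measurable_const
    exact kkm.comp (by fun_prop)
  have mnear : Measurable (fun x => if |x - y| < R then kk (2/p) (x-y) else (0:ℝ≥0∞)) := by
    apply Measurable.ite (measurableSet_lt (by fun_prop) (by fun_prop)) _ measurable_const
    exact kkm.comp (by fun_prop)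
  rw [lintegral_add_left (by fun_prop), lintegral_const_mul _ mnear]
  have e1 := lintegral_sub_right_eq_self (μ := volume) (fun x : ℝ => if |x| < R then kk (2/p) x else 0) y
  rw [e1, kk_near _ _ hl hl1 hR]
  have hold := ENNReal.lintegral_mul_le_Lp_mul_Lq volume hpq (f := fun x => ENNReal.ofReal (h x))
    (g := fun x => if |x - y| < R then (0:ℝ≥0∞) else kk (2/p) (x-y)) (by fun_prop) mfar.aemeasurable
  have e2 := lintegral_sub_right_eq_self (μ := volume) (fun x : ℝ => (if |x| < R then 0 else kk (2/p) x) ^ p) y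
  rw [e2, kk_far _ _ _ hlp hp0 hR, hS', ENNReal.ofReal_rpow_of_pos hS, ENNReal.ofReal_rpow_of_pos (by positivity),
    ← ENNReal.ofReal_mul (by positivity)] at hold
  rw [← ENNReal.ofReal_mul hB.le]
  refine (add_le_add le_rfl hold).trans ?_
  have h1l : 0 < 1 - 2/p := by linarith
  rw [← ENNReal.ofReal_add (by positivity) (by positivity)]
  apply ENNReal.ofReal_le_ofReal
  apply le_of_eq
  have hqp : q / p = q - 1 := by
    have : q * (1/q + 1/p) = q := by rw [hqq, mul_one]
    have h3 : q * (1/q + 1/p) = 1 + q / p := by field_simp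
    linarith
  have f1 : B * R ^ (1 - 2/p) = B ^ (q-1) * S ^ (1 - 2/p) := by
    rw [hRd, Real.mul_rpow hS.le (by positivity), ← Real.rpow_mul hB.le, mul_comm (S ^ _), ← mul_assoc]
    congr 1
    nth_rewrite 1 [← Real.rpow_one B]
    rw [← Real.rpow_add hB]
    congr 1
    have : -q * (1 - 2/p) = - q + 2 * (q / p) := by ring
    rw [this, hqp]; ring
  have f2 : S ^ (1/q) * (2 * R⁻¹) ^ (1/p) = 2 ^ (1/p) * (B ^ (q-1) * S ^ (1 - 2/p)) := by
    rw [Real.mul_rpow (by norm_num) (by positivity), hRd, mul_inv, Real.mul_rpow (by positivity) (by positivity),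
      Real.inv_rpow hS.le, ← Real.rpow_neg hS.le, ← Real.rpow_neg hB.le, neg_neg, ← Real.rpow_mul hB.le]
    have g1 : q * (1/p) = q - 1 := by rw [← hqp]; ring
    have g2 : S ^ (1 - 2/p) = S ^ (1/q) * S ^ (-(1/p)) := by
      rw [← Real.rpow_add hS]; congr 1
      have : 2/p = 2 * (1/p) := by ring
      linarith
    rw [g1, g2]; ring
  rw [f2, add_mul, mul_left_comm, f1]

lemma HLS (p q : ℝ) (hp : 2 < p) (hpq : q.HolderConjugate p) :
    ∃ C : ℝ, 0 < C ∧ ∀ (h : ℝ → ℝ) (S : ℝ), 0 < S → Measurable h → (∀ x, 0 ≤ h x) →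
      ∫⁻ x, ENNReal.ofReal (h x) ^ q = ENNReal.ofReal S →
      ∫⁻ x, ∫⁻ y, ENNReal.ofReal (h x) * ENNReal.ofReal (h y) * kk (2/p) (x - y) ≤
        ENNReal.ofReal (C * S ^ (2 / q)) := by
  have hp0 : 0 < p := by linarith
  have hq0 : 0 < q := hpq.pos
  have hl1 : 2/p < 1 := by rw [div_lt_one hp0]; exact hp
  have h1l : 0 < 1 - 2/p := by linarith
  set C1 : ℝ := 2 / (1 - 2/p) + 2 ^ (1/p) with hC1
  have hC10 : 0 < C1 := by positivity
  refine ⟨2 * C1, by positivity, ?_⟩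
  intro h S hS hm h0 hS'
  have kkm := kk_meas (2/p)
  let Φ : ℝ → ℝ → ℝ≥0∞ := fun x y => ENNReal.ofReal (h y) * ((if h x ≤ h y then ENNReal.ofReal (h x) else 0) * kk (2/p) (x - y))
  have mΦ : Measurable (Function.uncurry Φ) := by
    simp only [Function.uncurry_def, Φ]
    apply Measurable.mul (by fun_prop)
    apply Measurable.mul
    · exact Measurable.ite (measurableSet_le (by fun_prop) (by fun_prop)) (by fun_prop) measurable_const
    · exact kkm.comp (by fun_prop)
  have ks : ∀ x y, kk (2/p) (x - y) = kk (2/p) (y - x) := fun x y => by simp only [kk, abs_sub_comm]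
  have step : ∀ x y, ENNReal.ofReal (h x) * ENNReal.ofReal (h y) * kk (2/p) (x - y) ≤ Φ x y + Φ y x := by
    intro x y
    rcases le_total (h x) (h y) with hh | hh
    · refine le_add_right ?_
      simp only [Φ, hh, if_true]
      rw [mul_comm (ENNReal.ofReal (h x)), mul_assoc]
    · refine le_add_left ?_
      simp only [Φ, hh, if_true]
      rw [mul_assoc, ks x y]
  have bd : ∫⁻ y, ∫⁻ x, Φ x y ≤ ENNReal.ofReal (C1 * S ^ (2/q)) := by
    have hin : ∀ y, ∫⁻ x, Φ x y ≤ ENNReal.ofReal (C1 * S ^ (1 - 2/p)) * ENNReal.ofReal (h y) ^ q := by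
      intro y
      simp only [Φ]
      rw [lintegral_const_mul']
      swap
      · exact ENNReal.ofReal_ne_top
      rcases (h0 y).eq_or_lt with hy | hy
      · rw [← hy]; simp
      · refine (mul_le_mul_right (inner_bd p q S (h y) hp hpq hS hy h hm h0 hS' y) _).trans ?_
        rw [ENNReal.ofReal_rpow_of_pos hy, ← ENNReal.ofReal_mul hy.le, ← ENNReal.ofReal_mul (by positivity)]
        apply ENNReal.ofReal_le_ofReal
        apply le_of_eq
        have : h y ^ q = h y * h y ^ (q - 1) := by
          nth_rewrite 2 [← Real.rpow_one (h y)]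
          rw [← Real.rpow_add hy]; congr 1; ring
        rw [this, ← hC1]; ring
    refine (lintegral_mono hin).trans ?_
    rw [lintegral_const_mul' _ _ ENNReal.ofReal_ne_top, hS', ← ENNReal.ofReal_mul (by positivity)]
    apply ENNReal.ofReal_le_ofReal
    apply le_of_eq
    rw [mul_assoc]
    nth_rewrite 2 [← Real.rpow_one S]
    rw [← Real.rpow_add hS]
    congr 2
    have := hpq.inv_add_inv_eq_one
    have : 2 / q = 2 * q⁻¹ := by ring
    have : 2 / p = 2 * p⁻¹ := by ring
    linarith
  have mΦ1 : Measurable (fun x => ∫⁻ y, Φ x y) := mΦ.lintegral_prod_right'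
  calc ∫⁻ x, ∫⁻ y, ENNReal.ofReal (h x) * ENNReal.ofReal (h y) * kk (2/p) (x - y)
      ≤ ∫⁻ x, ∫⁻ y, (Φ x y + Φ y x) := lintegral_mono fun x => lintegral_mono fun y => step x y
    _ = ∫⁻ x, ((∫⁻ y, Φ x y) + ∫⁻ y, Φ y x) := by
        apply lintegral_congr; intro x
        exact lintegral_add_left (f := fun y => Φ x y) (mΦ.comp (measurable_prodMk_left)) _
    _ = (∫⁻ x, ∫⁻ y, Φ x y) + ∫⁻ x, ∫⁻ y, Φ y x := lintegral_add_left mΦ1 _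
    _ = (∫⁻ y, ∫⁻ x, Φ x y) + ∫⁻ x, ∫⁻ y, Φ y x := by
        rw [lintegral_lintegral_swap mΦ.aemeasurable]
    _ ≤ ENNReal.ofReal (C1 * S ^ (2/q)) + ENNReal.ofReal (C1 * S ^ (2/q)) := add_le_add bd bd
    _ = ENNReal.ofReal (2 * C1 * S ^ (2/q)) := by
        rw [← ENNReal.ofReal_add (by positivity) (by positivity)]; congr 1; ring


noncomputable def ee (σ : ℝ) (τ : ℝ → ℝ) (x ξ : ℝ) : ℂ := cexp (I * ((x * ξ - τ x * |ξ| ^ σ : ℝ) : ℂ))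

lemma norm_ee (σ τ x ξ) : ‖ee σ τ x ξ‖ = 1 := by
  rw [ee, mul_comm I, Complex.norm_exp_ofReal_mul_I]

lemma ee_meas (σ : ℝ) (τ : ℝ → ℝ) (hτ : Measurable τ) : Measurable (fun z : ℝ × ℝ => ee σ τ z.1 z.2) := by
  unfold ee; fun_prop

lemma TT (α σ C : ℝ) (hα1 : α < 1) (hC : 0 < C) 
    (hk : ∀ x t N : ℝ, x ≠ 0 → 0 ≤ N →
      ‖∫ ξ in Set.Icc (-N) N, Gk α σ x t ξ‖ ≤ C * |x| ^ (-(1 - α)))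
    (τ : ℝ → ℝ) (hτ : Measurable τ) (hb : ℝ → ℂ) (hm : Measurable hb) (hi : Integrable hb) (N : ℝ) (hN : 0 ≤ N) :
    ∫⁻ ξ in Set.Icc (-N) N, ENNReal.ofReal (|ξ| ^ (-α) * ‖∫ x, hb x * ee σ τ x ξ‖ ^ 2) ≤
      ENNReal.ofReal C * ∫⁻ x, ∫⁻ y, ENNReal.ofReal ‖hb x‖ * ENNReal.ofReal ‖hb y‖ * kk (1 - α) (x - y) := by
  set μ := (volume : Measure ℝ).restrict (Set.Icc (-N) N) with hμ
  set H : ℝ → ℂ := fun ξ => ∫ x, hb x * ee σ τ x ξ with hH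
  have em := ee_meas σ τ hτ
  have kkm := kk_meas (1 - α)
  let F : ℝ → ℝ × ℝ → ℂ := fun ξ z => (((|ξ| ^ (-α) : ℝ) : ℂ)) * ((hb z.1 * ee σ τ z.1 ξ) * (starRingEnd ℂ) (hb z.2 * ee σ τ z.2 ξ))
  have cm : Measurable (starRingEnd ℂ) := Complex.continuous_conj.measurable
  have mF : Measurable (Function.uncurry F) := by
    simp only [Function.uncurry_def, F]
    apply Measurable.mul (by fun_prop)
    apply Measurable.mul
    · exact (by fun_prop : Measurable fun a : ℝ × ℝ × ℝ => hb a.2.1).mul (em.comp (by fun_prop : Measurable fun a : ℝ × ℝ × ℝ => (a.2.1, a.1)))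
    · apply cm.comp
      exact (by fun_prop : Measurable fun a : ℝ × ℝ × ℝ => hb a.2.2).mul (em.comp (by fun_prop : Measurable fun a : ℝ × ℝ × ℝ => (a.2.2, a.1)))
  have iF : Integrable (Function.uncurry F) (μ.prod (volume.prod volume)) := by
    have h1 : Integrable (fun z : ℝ × ℝ => ‖hb z.1‖ * ‖hb z.2‖) (volume.prod volume) := hi.norm.mul_prod hi.norm
    have h2 : Integrable (fun w : ℝ × (ℝ × ℝ) => |w.1| ^ (-α) * (‖hb w.2.1‖ * ‖hb w.2.2‖)) (μ.prod (volume.prod volume)) :=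
      Integrable.mul_prod (f := fun ξ : ℝ => |ξ| ^ (-α)) (abs_rpow_int α hα1 N) h1
    refine h2.mono' mF.aestronglyMeasurable (Filter.Eventually.of_forall ?_)
    rintro ⟨ξ, x, y⟩
    simp only [Function.uncurry_apply_pair, F, norm_mul, RCLike.norm_conj, norm_ee, mul_one, Complex.norm_real]
    rw [Real.norm_of_nonneg (Real.rpow_nonneg (abs_nonneg _) _)]
  have e1 : ∀ ξ, (((|ξ| ^ (-α) * ‖H ξ‖ ^ 2 : ℝ)) : ℂ) = ∫ z, F ξ z ∂(volume.prod volume) := by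
    intro ξ
    simp only [F]
    rw [integral_const_mul, integral_prod_mul (fun x => hb x * ee σ τ x ξ) (fun y => (starRingEnd ℂ) (hb y * ee σ τ y ξ)),
      integral_conj, Complex.mul_conj, Complex.normSq_eq_norm_sq]
    push_cast; rfl
  have e2 : ((∫ ξ, |ξ| ^ (-α) * ‖H ξ‖ ^ 2 ∂μ : ℝ) : ℂ) = ∫ z, ∫ ξ, F ξ z ∂μ ∂(volume.prod volume) := by
    rw [← integral_integral_swap iF, ← integral_complex_ofReal]
    exact integral_congr_ae (Filter.Eventually.of_forall e1)
  have i1 : Integrable (fun ξ => |ξ| ^ (-α) * ‖H ξ‖ ^ 2) μ := by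
    have := iF.integral_prod_left
    simp only [Function.uncurry_apply_pair, ← e1] at this
    have h2 := this.re
    exact h2.congr (Filter.Eventually.of_forall fun ξ => Complex.ofReal_re _)
  have e3 : ∀ z : ℝ × ℝ, ∫ ξ, F ξ z ∂μ = (hb z.1 * (starRingEnd ℂ) (hb z.2)) * ∫ ξ in Set.Icc (-N) N, Gk α σ (z.1 - z.2) (τ z.1 - τ z.2) ξ := by
    intro z
    rw [← integral_const_mul]
    apply integral_congr_ae (Filter.Eventually.of_forall ?_)
    intro ξ
    simp only [F, ee, Gk, map_mul, ← Complex.exp_conj, Complex.conj_I, Complex.conj_ofReal]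
    have : cexp (I * ((((z.1 - z.2) * ξ - (τ z.1 - τ z.2) * |ξ| ^ σ : ℝ)) : ℂ)) =
      cexp (I * ((z.1 * ξ - τ z.1 * |ξ| ^ σ : ℝ) : ℂ)) * cexp (-I * ((z.2 * ξ - τ z.2 * |ξ| ^ σ : ℝ) : ℂ)) := by
      rw [← Complex.exp_add]; congr 1; push_cast; ring
    rw [this]; ring
  rw [← ofReal_integral_eq_lintegral_ofReal i1 (Filter.Eventually.of_forall fun ξ => by positivity)]
  have n0 : 0 ≤ ∫ ξ, |ξ| ^ (-α) * ‖H ξ‖ ^ 2 ∂μ := integral_nonneg fun ξ => by positivity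
  have e4 : ENNReal.ofReal (∫ ξ, |ξ| ^ (-α) * ‖H ξ‖ ^ 2 ∂μ) = ‖∫ z, ∫ ξ, F ξ z ∂μ ∂(volume.prod volume)‖ₑ := by
    rw [← e2, ← ofReal_norm, Complex.norm_real, Real.norm_of_nonneg n0]
  rw [e4]
  refine (enorm_integral_le_lintegral_enorm _).trans ?_
  have step : ∀ z : ℝ × ℝ, ‖∫ ξ, F ξ z ∂μ‖ₑ ≤ ENNReal.ofReal C * (ENNReal.ofReal ‖hb z.1‖ * ENNReal.ofReal ‖hb z.2‖ * kk (1 - α) (z.1 - z.2)) := by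
    intro z
    rw [e3, enorm_mul, enorm_mul, ← ofReal_norm (hb z.1), ← ofReal_norm ((starRingEnd ℂ) _), RCLike.norm_conj,
      mul_left_comm]
    apply mul_le_mul_right
    rw [← ofReal_norm]
    by_cases h : z.1 - z.2 = 0
    · rw [h, kk]
      simp only [abs_zero, ENNReal.ofReal_zero]
      rw [ENNReal.zero_rpow_of_neg (by linarith), ENNReal.mul_top (by simpa using hC)]
      exact le_top
    · rw [kk, ENNReal.ofReal_rpow_of_pos (by positivity), ← ENNReal.ofReal_mul hC.le]
      exact ENNReal.ofReal_le_ofReal (hk _ _ _ h hN)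
  refine (lintegral_mono step).trans ?_
  rw [lintegral_const_mul' _ _ ENNReal.ofReal_ne_top, lintegral_prod]
  apply Measurable.aemeasurable
  exact (by fun_prop : Measurable fun z : ℝ × ℝ => ENNReal.ofReal ‖hb z.1‖ * ENNReal.ofReal ‖hb z.2‖).mul (kkm.comp (by fun_prop))

lemma core (σ s p : ℝ) (hσ : 1 < σ) (hs : 1/4 ≤ s) (hs2 : s < 1/2)
    (hp : p = 2 / (1 - 2*s)) : ∃ C : ℝ, 0 < C ∧ ∀ (τ : ℝ → ℝ) (G : ℝ → ℂ) (N R : ℝ), Measurable τ → Continuous G → 0 ≤ N →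
    (∫⁻ x in Set.Icc (-R) R, ‖∫ ξ in Set.Icc (-N) N, ee σ τ x ξ * G ξ‖ₑ ^ p) ^ (1/p) ≤
      ENNReal.ofReal C * (∫⁻ ξ : ℝ, (ENNReal.ofReal (|ξ| ^ s * ‖G ξ‖)) ^ (2:ℝ)) ^ ((1:ℝ)/2) := by
  obtain ⟨C1, hC1, hk⟩ := kern (2*s) σ (by linarith) (by linarith) hσ
  have h1s : 0 < 1 - 2 * s := by linarith
  have hp2 : 2 < p := by
    rw [hp, lt_div_iff₀ h1s]; linarith
  have hp0 : 0 < p := by linarith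
  have hlam : 2 / p = 1 - 2 * s := by rw [hp]; field_simp
  set q := p / (p - 1) with hq
  have hpq' : p.HolderConjugate q := Real.HolderConjugate.conjExponent (by linarith)
  have hpq : q.HolderConjugate p := hpq'.symm
  obtain ⟨C2, hC2, hls⟩ := HLS p q hp2 hpq
  refine ⟨Real.sqrt (C1 * C2), by positivity, ?_⟩
  intro τ G N R hτ hG hN
  set μ := (volume : Measure ℝ).restrict (Set.Icc (-N) N) with hμ
  set u : ℝ → ℂ := fun x => ∫ ξ, ee σ τ x ξ * G ξ ∂μ with hu
  set E := ∫⁻ ξ : ℝ, (ENNReal.ofReal (|ξ| ^ s * ‖G ξ‖)) ^ (2:ℝ) with hE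
  have em := ee_meas σ τ hτ
  have iG : Integrable G μ := hG.continuousOn.integrableOn_compact isCompact_Icc
  have mu' : Measurable u := by
    have : StronglyMeasurable (Function.uncurry fun x ξ => ee σ τ x ξ * G ξ) := by
      apply Measurable.stronglyMeasurable
      exact em.mul (hG.measurable.comp measurable_snd)
    exact this.integral_prod_right.measurable
  have bu : ∀ x, ‖u x‖ ≤ ∫ ξ, ‖G ξ‖ ∂μ := by
    intro x
    refine (norm_integral_le_integral_norm _).trans (le_of_eq ?_)
    simp only [norm_mul, norm_ee, one_mul]
  set M := ∫ ξ, ‖G ξ‖ ∂μ with hM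
  have hM0 : 0 ≤ M := integral_nonneg fun _ => norm_nonneg _
  set D := Set.Icc (-R) R with hD
  have mD : MeasurableSet D := measurableSet_Icc
  have iA : IntegrableOn (fun x => ‖u x‖ ^ p) D := by
    refine Integrable.mono' (g := fun _ => M ^ p) (integrable_const _) (by fun_prop : Measurable fun x => ‖u x‖ ^ p).aestronglyMeasurable (Filter.Eventually.of_forall fun x => ?_)
    rw [Real.norm_of_nonneg (by positivity)]
    exact Real.rpow_le_rpow (norm_nonneg _) (bu x) hp0.le
  set A := ∫ x in D, ‖u x‖ ^ p with hA
  have hA0 : 0 ≤ A := integral_nonneg fun x => by positivity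
  have eA : ∫⁻ x in D, ‖u x‖ₑ ^ p = ENNReal.ofReal A := by
    rw [hA, ofReal_integral_eq_lintegral_ofReal iA (Filter.Eventually.of_forall fun x => by positivity)]
    apply lintegral_congr; intro x
    rw [← ofReal_norm, ENNReal.ofReal_rpow_of_nonneg (norm_nonneg _) hp0.le]
  rw [eA]
  rcases hA0.eq_or_lt with hA1 | hA1
  · rw [← hA1, ENNReal.ofReal_zero, ENNReal.zero_rpow_of_pos (by positivity)]; exact zero_le
  -- the dual function
  set hb : ℝ → ℂ := D.indicator (fun x => ((‖u x‖ ^ (p - 2) : ℝ) : ℂ) * (starRingEnd ℂ) (u x)) with hhb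
  have cm : Measurable (starRingEnd ℂ) := Complex.continuous_conj.measurable
  have mhb : Measurable hb := by
    apply Measurable.indicator _ mD
    exact (by fun_prop : Measurable fun x => ((‖u x‖ ^ (p - 2) : ℝ) : ℂ)).mul (cm.comp mu')
  have nhb : ∀ x ∈ D, ‖hb x‖ = ‖u x‖ ^ (p - 1) := by
    intro x hx
    rw [hhb, Set.indicator_of_mem hx, norm_mul, RCLike.norm_conj, Complex.norm_real, Real.norm_of_nonneg (by positivity)]
    nth_rewrite 2 [← Real.rpow_one ‖u x‖]
    rw [← Real.rpow_add_of_nonneg (norm_nonneg _) (by linarith) (by norm_num)]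
    congr 1; ring
  have ihb : Integrable hb := by
    rw [hhb, integrable_indicator_iff mD]
    refine Integrable.mono' (g := fun _ => M ^ (p-1)) (integrable_const _) ?_ ?_
    · exact ((by fun_prop : Measurable fun x => ((‖u x‖ ^ (p - 2) : ℝ) : ℂ)).mul (cm.comp mu')).aestronglyMeasurable
    · filter_upwards [ae_restrict_mem mD] with x hx
      have := nhb x hx
      rw [hhb, Set.indicator_of_mem hx] at this
      rw [this]
      exact Real.rpow_le_rpow (norm_nonneg _) (bu x) (by linarith)
  have hbu : ∀ x, hb x * u x = D.indicator (fun x => ((‖u x‖ ^ p : ℝ) : ℂ)) x := by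
    intro x
    by_cases hx : x ∈ D
    · rw [hhb, Set.indicator_of_mem hx, Set.indicator_of_mem hx, mul_assoc, mul_comm _ (u x), Complex.mul_conj, Complex.normSq_eq_norm_sq,
        ← Complex.ofReal_mul]
      congr 1
      rw [← Real.rpow_natCast, ← Real.rpow_add_of_nonneg (norm_nonneg _) (by linarith) (by norm_num)]
      congr 1; push_cast; ring
    · rw [hhb, Set.indicator_of_notMem hx, Set.indicator_of_notMem hx, zero_mul]
  set H : ℝ → ℂ := fun ξ => ∫ x, hb x * ee σ τ x ξ with hH
  have mH : Measurable H := by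
    have : StronglyMeasurable (Function.uncurry fun ξ x => hb x * ee σ τ x ξ) := by
      apply Measurable.stronglyMeasurable
      exact (mhb.comp measurable_snd).mul (em.comp measurable_swap)
    exact this.integral_prod_right.measurable
  have dual : (A : ℂ) = ∫ ξ, H ξ * G ξ ∂μ := by
    have iF : Integrable (Function.uncurry fun x ξ => hb x * (ee σ τ x ξ * G ξ)) (volume.prod μ) := by
      refine (ihb.norm.mul_prod iG.norm).mono' ?_ (Filter.Eventually.of_forall ?_)
      · apply Measurable.aestronglyMeasurable
        exact (mhb.comp measurable_fst).mul (em.mul (hG.measurable.comp measurable_snd))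
      · rintro ⟨x, ξ⟩
        simp [norm_ee]
    calc (A : ℂ) = ∫ x, hb x * u x := by
          simp only [hbu]
          rw [integral_indicator mD, integral_complex_ofReal]
      _ = ∫ x, ∫ ξ, hb x * (ee σ τ x ξ * G ξ) ∂μ := by
          congr 1; ext x; rw [integral_const_mul]
      _ = ∫ ξ, (∫ x, hb x * (ee σ τ x ξ * G ξ)) ∂μ := integral_integral_swap iF
      _ = ∫ ξ, H ξ * G ξ ∂μ := by
          congr 1; ext ξ; rw [hH, ← integral_mul_const]
          congr 1; ext x; ring
  have eS : ∫⁻ x, ENNReal.ofReal ‖hb x‖ ^ q = ENNReal.ofReal A := by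
    have hq0 : 0 < q := hpq.pos
    have hqp : (p - 1) * q = p := by rw [hq]; field_simp [show p - 1 ≠ 0 by linarith]
    rw [← eA, ← lintegral_indicator mD]
    apply lintegral_congr; intro x
    by_cases hx : x ∈ D
    · rw [Set.indicator_of_mem hx, nhb x hx, ← ofReal_norm,
        ENNReal.ofReal_rpow_of_nonneg (by positivity) hq0.le, ENNReal.ofReal_rpow_of_nonneg (by positivity) hp0.le,
        ← Real.rpow_mul (norm_nonneg _), hqp]
    · rw [Set.indicator_of_notMem hx, hhb, Set.indicator_of_notMem hx]
      simp [hq0]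
  have tt := TT (2*s) σ C1 (by linarith) hC1 hk τ hτ hb mhb ihb N hN
  have hl := hls (fun x => ‖hb x‖) A hA1 mhb.norm (fun x => norm_nonneg _) eS
  rw [hlam] at hl
  have tt2 := tt.trans (mul_le_mul_right hl _)
  rw [← ENNReal.ofReal_mul hC1.le] at tt2
  have holder : ENNReal.ofReal A ≤ E ^ ((1:ℝ)/2) * (ENNReal.ofReal (C1 * (C2 * A ^ (2/q)))) ^ ((1:ℝ)/2) := by
    calc ENNReal.ofReal A = ‖(A : ℂ)‖ₑ := by
          rw [← ofReal_norm, Complex.norm_real, Real.norm_of_nonneg hA0]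
      _ ≤ ∫⁻ ξ, ‖H ξ * G ξ‖ₑ ∂μ := by rw [dual]; exact enorm_integral_le_lintegral_enorm _
      _ ≤ ∫⁻ ξ, ((fun ξ => ENNReal.ofReal (|ξ| ^ s * ‖G ξ‖)) * (fun ξ => ENNReal.ofReal (|ξ| ^ (-s) * ‖H ξ‖))) ξ ∂μ := by
          apply lintegral_mono_ae
          have : ∀ᵐ ξ : ℝ ∂μ, ξ ≠ 0 := ae_restrict_of_ae (by simp [ae_iff])
          filter_upwards [this] with ξ hξ
          rw [Pi.mul_apply, ← ofReal_norm, ← ENNReal.ofReal_mul (by positivity), norm_mul]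
          apply ENNReal.ofReal_le_ofReal
          apply le_of_eq
          rw [Real.rpow_neg (abs_nonneg _)]
          have : |ξ| ^ s ≠ 0 := (Real.rpow_pos_of_pos (abs_pos.2 hξ) s).ne'
          field_simp
      _ ≤ (∫⁻ ξ, ENNReal.ofReal (|ξ| ^ s * ‖G ξ‖) ^ (2:ℝ) ∂μ) ^ (1/(2:ℝ)) * (∫⁻ ξ, ENNReal.ofReal (|ξ| ^ (-s) * ‖H ξ‖) ^ (2:ℝ) ∂μ) ^ (1/(2:ℝ)) := by
          apply ENNReal.lintegral_mul_le_Lp_mul_Lq μ Real.HolderConjugate.two_two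
          · have := hG.measurable
            fun_prop
          · fun_prop
      _ ≤ _ := by
          gcongr
          · exact lintegral_mono' Measure.restrict_le_self le_rfl
          · refine le_trans (le_of_eq ?_) tt2
            apply lintegral_congr; intro ξ
            rw [ENNReal.ofReal_rpow_of_nonneg (by positivity) (by norm_num)]
            congr 1
            rw [Real.mul_rpow (by positivity) (by positivity), ← Real.rpow_mul (abs_nonneg _)]
            congr 1
            · congr 1; ring
            · exact Real.rpow_ofNat _ 2
  have e5 : (ENNReal.ofReal (C1 * (C2 * A ^ (2/q)))) ^ ((1:ℝ)/2) = ENNReal.ofReal (Real.sqrt (C1 * C2)) * ENNReal.ofReal (A ^ (1/q)) := by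
    rw [ENNReal.ofReal_rpow_of_nonneg (by positivity) (by norm_num), ← ENNReal.ofReal_mul (by positivity)]
    congr 1
    rw [← mul_assoc, Real.mul_rpow (by positivity) (by positivity), ← Real.rpow_mul hA0, Real.sqrt_eq_rpow]
    congr 2; ring
  have e6 : ENNReal.ofReal A = ENNReal.ofReal (A ^ (1/p)) * ENNReal.ofReal (A ^ (1/q)) := by
    rw [← ENNReal.ofReal_mul (by positivity), ← Real.rpow_add hA1]
    have := hpq'.inv_add_inv_eq_one
    rw [one_div, one_div, this, Real.rpow_one]
  rw [ENNReal.ofReal_rpow_of_nonneg hA0 (by positivity)]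
  rw [e5, ← mul_assoc] at holder
  rw [e6] at holder
  have c0 : ENNReal.ofReal (A ^ (1/q)) ≠ 0 := by
    have : 0 < A ^ (1/q) := by positivity
    simpa using this
  have := (ENNReal.mul_le_mul_iff_left c0 ENNReal.ofReal_ne_top).1 holder
  rwa [mul_comm] at this


open FourierTransform in
lemma fourierT_eq (f : SchwartzMap ℝ ℂ) :
    fourierT (fun y => f y) = fun ξ => (𝓕 f : SchwartzMap ℝ ℂ) (ξ * (2 * Real.pi)⁻¹) := by
  ext ξ
  rw [SchwartzMap.fourier_coe, Real.fourier_real_eq_integral_exp_smul, fourierT]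
  congr 1; ext x
  rw [smul_eq_mul, mul_comm]
  congr 2
  have : (Real.pi : ℂ) ≠ 0 := by exact_mod_cast Real.pi_ne_zero
  push_cast
  field_simp

lemma fourierT_cont (f : SchwartzMap ℝ ℂ) : Continuous (fourierT (fun y => f y)) := by
  rw [fourierT_eq]
  exact (SchwartzMap.continuous _).comp (by fun_prop)

lemma fourierT_int (f : SchwartzMap ℝ ℂ) : Integrable (fourierT (fun y => f y)) := by
  rw [fourierT_eq]
  exact (SchwartzMap.integrable _).comp_mul_right' (by positivity)

section
variable (σ : ℝ) (G : ℝ → ℂ)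

noncomputable def UU (τ : ℝ → ℝ) (x : ℝ) : ℂ := ∫ ξ, ee σ τ x ξ * G ξ

lemma UU_meas (hG : Continuous G) (τ : ℝ → ℝ) (hτ : Measurable τ) : Measurable (UU σ G τ) := by
  have : StronglyMeasurable (Function.uncurry fun x ξ => ee σ τ x ξ * G ξ) := by
    apply Measurable.stronglyMeasurable
    exact (ee_meas σ τ hτ).mul (hG.measurable.comp measurable_snd)
  exact this.integral_prod_right.measurable

lemma ee_int (hG : Continuous G) (iG : Integrable G) (τ : ℝ → ℝ) (x : ℝ) :
    Integrable (fun ξ => ee σ τ x ξ * G ξ) := by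
  refine iG.norm.mono' ?_ (Filter.Eventually.of_forall fun ξ => by simp [norm_ee])
  apply Measurable.aestronglyMeasurable
  have := hG.measurable
  unfold ee; fun_prop

lemma UU_cont (hG : Continuous G) (iG : Integrable G) (x : ℝ) :
    Continuous (fun t : ℝ => UU σ G (fun _ => t) x) := by
  unfold UU
  apply continuous_of_dominated (bound := fun ξ => ‖G ξ‖)
  · intro t; exact (ee_int σ G hG iG _ x).aestronglyMeasurable
  · intro t; exact Filter.Eventually.of_forall fun ξ => by simp [norm_ee]
  · exact iG.norm
  · refine Filter.Eventually.of_forall fun ξ => ?_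
    unfold ee; fun_prop

lemma UU_congr (τ τ' : ℝ → ℝ) (x : ℝ) (h : τ x = τ' x) : UU σ G τ x = UU σ G τ' x := by
  simp only [UU, ee, h]

lemma select (hG : Continuous G) (t : ℕ → ℝ) (n : ℕ) : ∃ τ : ℝ → ℝ, Measurable τ ∧
    ∀ x, ∀ k ≤ n, ‖UU σ G (fun _ => t k) x‖ ≤ ‖UU σ G τ x‖ := by
  induction n with
  | zero => exact ⟨fun _ => t 0, measurable_const, fun x k hk => by rw [Nat.le_zero.1 hk]⟩
  | succ n ih =>
    obtain ⟨τ, hτ, h⟩ := ih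
    classical
    refine ⟨fun x => if ‖UU σ G τ x‖ ≤ ‖UU σ G (fun _ => t (n+1)) x‖ then t (n+1) else τ x, ?_, ?_⟩
    · exact Measurable.ite (measurableSet_le (UU_meas σ G hG τ hτ).norm (UU_meas σ G hG _ measurable_const).norm) measurable_const hτ
    · intro x k hk
      by_cases hx : ‖UU σ G τ x‖ ≤ ‖UU σ G (fun _ => t (n+1)) x‖
      · rw [UU_congr σ G (fun x => if ‖UU σ G τ x‖ ≤ ‖UU σ G (fun _ => t (n+1)) x‖ then t (n+1) else τ x) (fun _ => t (n+1)) x (by simp [hx])]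
        rcases Nat.le_succ_iff.1 hk with hk | hk
        · exact (h x k hk).trans hx
        · rw [hk]
      · rw [UU_congr σ G (fun x => if ‖UU σ G τ x‖ ≤ ‖UU σ G (fun _ => t (n+1)) x‖ then t (n+1) else τ x) τ x (by simp [hx])]
        rcases Nat.le_succ_iff.1 hk with hk | hk
        · exact h x k hk
        · rw [hk]; exact (not_le.1 hx).le

end

lemma maxbd (σ p : ℝ) (hp : 0 < p) (G : ℝ → ℂ) (hG : Continuous G) (iG : Integrable G) (B : ℝ≥0∞)
    (hB : ∀ (τ : ℝ → ℝ) (N R : ℝ), Measurable τ → 0 ≤ N →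
      (∫⁻ x in Set.Icc (-R) R, ‖∫ ξ in Set.Icc (-N) N, ee σ τ x ξ * G ξ‖ₑ ^ p) ^ (1/p) ≤ B) :
    (∫⁻ x, (⨆ t : ℝ, ‖UU σ G (fun _ => t) x‖ₑ) ^ p) ^ (1/p) ≤ B := by
  choose τ hτ hsel using select σ G hG (TopologicalSpace.denseSeq ℝ)
  let I (n : ℕ) : Set ℝ := Set.Icc (-(n:ℝ)) n
  let u : ℕ → ℝ → ℂ := fun n x => ∫ ξ in I n, ee σ (τ n) x ξ * G ξ
  let W : ℕ → ℝ → ℝ≥0∞ := fun n x => (I n).indicator (fun x => ‖u n x‖ₑ ^ p) x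
  have mu : ∀ n, Measurable (u n) := by
    intro n
    have : StronglyMeasurable (Function.uncurry fun x ξ => ee σ (τ n) x ξ * G ξ) := by
      apply Measurable.stronglyMeasurable
      exact (ee_meas σ _ (hτ n)).mul (hG.measurable.comp measurable_snd)
    exact (this.integral_prod_right (ν := volume.restrict (I n))).measurable
  have mW : ∀ n, Measurable (W n) := fun n =>
    Measurable.indicator (by have := mu n; fun_prop) measurableSet_Icc
  have tail : Filter.Tendsto (fun n : ℕ => (∫ ξ, ‖G ξ‖) - ∫ ξ in I n, ‖G ξ‖) Filter.atTop (nhds 0) := by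
    have hc : AECover volume Filter.atTop I :=
      aecover_Icc (Filter.tendsto_neg_atTop_atBot.comp tendsto_natCast_atTop_atTop) tendsto_natCast_atTop_atTop
    have := hc.integral_tendsto_of_countably_generated iG.norm
    simpa using this.const_sub (∫ ξ, ‖G ξ‖)
  have diff : ∀ n x, ‖UU σ G (τ n) x‖ ≤ ‖u n x‖ + ((∫ ξ, ‖G ξ‖) - ∫ ξ in I n, ‖G ξ‖) := by
    intro n x
    have h1 := integral_add_compl (μ := volume) (s := I n) measurableSet_Icc (ee_int σ G hG iG (τ n) x)
    have h2 := integral_add_compl (μ := volume) (s := I n) measurableSet_Icc iG.norm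
    have h3 : ‖∫ ξ in (I n)ᶜ, ee σ (τ n) x ξ * G ξ‖ ≤ ∫ ξ in (I n)ᶜ, ‖G ξ‖ := by
      refine (norm_integral_le_integral_norm _).trans (le_of_eq ?_)
      simp only [norm_mul, norm_ee, one_mul]
    rw [UU, ← h1]
    refine (norm_add_le _ _).trans ?_
    simp only [u]
    linarith
  have pt : ∀ x, (⨆ t : ℝ, ‖UU σ G (fun _ => t) x‖ₑ) ^ p ≤ Filter.liminf (fun n => W n x) Filter.atTop := by
    intro x
    have e : Filter.liminf (fun n => ‖u n x‖ₑ ^ p) Filter.atTop ≤ Filter.liminf (fun n => W n x) Filter.atTop := by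
      refine Filter.liminf_le_liminf ?_
      obtain ⟨m, hm⟩ := exists_nat_ge |x|
      filter_upwards [Filter.eventually_ge_atTop m] with n hn
      have hx : x ∈ I n := by
        have : |x| ≤ n := hm.trans (by exact_mod_cast hn)
        exact abs_le.1 this
      simp only [W]
      rw [Set.indicator_of_mem hx]
    refine le_trans ?_ e
    have e2 : Filter.liminf (fun n => ‖u n x‖ₑ ^ p) Filter.atTop = (Filter.liminf (fun n => ‖u n x‖ₑ) Filter.atTop) ^ p :=
      ((ENNReal.orderIsoRpow p hp).liminf_apply (u := fun n => ‖u n x‖ₑ) (f := Filter.atTop)).symm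
    rw [e2]
    apply ENNReal.rpow_le_rpow _ hp.le
    apply iSup_le
    intro t
    apply le_of_forall_lt
    intro b hb
    have hbt : b ≠ ⊤ := ne_top_of_lt hb
    obtain ⟨c, hc⟩ : ∃ c : ℝ, c = b.toReal := ⟨_, rfl⟩
    have hbc : b = ENNReal.ofReal c := by rw [hc, ENNReal.ofReal_toReal hbt]
    have hc0 : 0 ≤ c := by rw [hc]; exact ENNReal.toReal_nonneg
    rw [hbc, ← ofReal_norm, ENNReal.ofReal_lt_ofReal_iff_of_nonneg hc0] at hb
    obtain ⟨c', h1, h2⟩ := exists_between hb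
    obtain ⟨c'', h3, h4⟩ := exists_between h1
    have hop : IsOpen {t' : ℝ | c' < ‖UU σ G (fun _ => t') x‖} :=
      isOpen_lt continuous_const (UU_cont σ G hG iG x).norm
    obtain ⟨k, hk⟩ := (TopologicalSpace.denseRange_denseSeq ℝ).exists_mem_open hop ⟨t, h2⟩
    have hk' : c' < ‖UU σ G (fun _ => TopologicalSpace.denseSeq ℝ k) x‖ := hk
    have ev : ∀ᶠ n in Filter.atTop, ENNReal.ofReal c'' ≤ ‖u n x‖ₑ := by
      filter_upwards [Filter.eventually_ge_atTop k, tail.eventually_lt_const (show (0:ℝ) < c' - c'' by linarith)] with n hn hn2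
      have := hsel n x k hn
      have := diff n x
      rw [← ofReal_norm]
      apply ENNReal.ofReal_le_ofReal
      linarith
    rw [hbc]
    refine lt_of_lt_of_le ?_ (Filter.le_liminf_of_le (by isBoundedDefault) ev)
    exact (ENNReal.ofReal_lt_ofReal_iff_of_nonneg hc0).2 h3
  have hWB : ∀ n, ∫⁻ x, W n x ≤ B ^ p := by
    intro n
    have := hB (τ n) n n (hτ n) (Nat.cast_nonneg n)
    simp only [W]
    rw [lintegral_indicator measurableSet_Icc]
    have h2 := ENNReal.rpow_le_rpow this hp.le
    rwa [← ENNReal.rpow_mul, one_div, inv_mul_cancel₀ hp.ne', ENNReal.rpow_one] at h2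
  have fin : ∫⁻ x, (⨆ t : ℝ, ‖UU σ G (fun _ => t) x‖ₑ) ^ p ≤ B ^ p := by
    refine (lintegral_mono pt).trans ?_
    refine (lintegral_liminf_le mW).trans ?_
    refine (Filter.liminf_le_liminf (Filter.Eventually.of_forall hWB)).trans ?_
    simp
  have h2 := ENNReal.rpow_le_rpow fin (show 0 ≤ 1/p by positivity)
  rwa [← ENNReal.rpow_mul, mul_one_div_cancel hp.ne', ENNReal.rpow_one] at h2

/-- Maximal function estimate for the fractional Schrödinger propagator:
for `σ > 1`, `1/4 ≤ s < 1/2`, `p = 2/(1-2s)`,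
`‖ sup_t |e^{-it|∇|^σ} f| ‖_{L^p_x} ≲ ‖ |∇|^s f ‖_{L²}` (the right side written
via Plancherel as the `L²` norm of `|ξ|^s f̂`). -/
theorem stmt6 (σ s p : ℝ) (hσ : 1 < σ) (hs : 1/4 ≤ s) (hs2 : s < 1/2)
    (hp : p = 2 / (1 - 2*s)) :
    ∃ C : ℝ, 0 < C ∧ ∀ f : SchwartzMap ℝ ℂ,
      (∫⁻ x : ℝ, (⨆ t : ℝ,
          (‖∫ ξ : ℝ, Complex.exp (-(Complex.I * (t : ℂ) * ((|ξ| ^ σ : ℝ) : ℂ)))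
              * fourierT (fun y => f y) ξ
              * Complex.exp (Complex.I * (x : ℂ) * (ξ : ℂ))‖₊ : ℝ≥0∞)) ^ p) ^ (1/p)
        ≤ ENNReal.ofReal C *
          (∫⁻ ξ : ℝ, (ENNReal.ofReal (|ξ| ^ s * ‖fourierT (fun y => f y) ξ‖)) ^ (2:ℝ)) ^ ((1:ℝ)/2) := by
  obtain ⟨C, hC, h⟩ := core σ s p hσ hs hs2 hp
  refine ⟨C, hC, fun f => ?_⟩
  have hp0 : 0 < p := by rw [hp]; exact div_pos (by norm_num) (by linarith)
  have hG := fourierT_cont f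
  have key := maxbd σ p hp0 (fourierT (fun y => f y)) hG (fourierT_int f) _
    (fun τ N R hτ hN => h τ _ N R hτ hG hN)
  refine le_trans (le_of_eq ?_) key
  congr 2
  ext x
  congr 2
  ext t
  rw [UU, enorm_eq_nnnorm]
  congr 3
  ext ξ
  rw [ee, mul_right_comm, ← Complex.exp_add]
  congr 2
  push_cast; ring
end

section
/- Let β ∈ (1/2,1), α > 0, σ = α/β, M > 0 and s ∈ [0,1). Define the kernel 𝒰_1(x) = ∫_ℝ |ξ|^{-s} χ(ξ) E_β(i^{-β}|ξ|^α) e^{ixξ} dξ, where χ is a smooth cutoff supported in {|ξ|^σ ≤ 2M} equal to 1 on {|ξ|^σ ≤ M}, and E_β(z) = Σ_{k≥0} z^k/Γ(βk+1). Then |𝒰_1(x)| ≲_s |x|^{s-1} for all x ≠ 0. -/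
open MeasureTheory Complex

/-- Mittag-Leffler function `E_β(z) = Σ_{k≥0} z^k/Γ(βk+1)`. -/
noncomputable def mlE (β : ℝ) (z : ℂ) : ℂ :=
  ∑' k : ℕ, z ^ k / ((Real.Gamma (β * (k:ℝ) + 1) : ℝ) : ℂ)

lemma ml_summable (β : ℝ) (hβ : 1/2 < β) (ρ : ℝ) (hρ : 0 ≤ ρ) :
    Summable (fun k : ℕ => ρ ^ k / Real.Gamma (β * (k:ℝ) + 1)) := by
  have h1 : Summable (fun k : ℕ => ρ ^ k / ((k / 2).factorial : ℝ)) := by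
    have hexp : Summable (fun m : ℕ => (ρ ^ 2) ^ m / (m.factorial : ℝ)) :=
      Real.summable_pow_div_factorial _
    apply Summable.even_add_odd
    · refine hexp.congr fun m => ?_
      rw [show 2 * m / 2 = m by omega, pow_mul]
    · refine (hexp.mul_left ρ).congr fun m => ?_
      rw [show (2 * m + 1) / 2 = m by omega, pow_succ ρ (2 * m), pow_mul]
      ring
  refine Summable.of_norm_bounded_eventually_nat h1 ?_
  filter_upwards [Filter.eventually_ge_atTop 2] with k hk
  have hm : 1 ≤ k / 2 := by omega
  have hk2 : ((k / 2 : ℕ) : ℝ) ≤ β * k := by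
    have : ((k / 2 : ℕ) : ℝ) ≤ (k : ℝ) / 2 := Nat.cast_div_le
    have : (0:ℝ) ≤ k := Nat.cast_nonneg k
    nlinarith
  have hm' : (1:ℝ) ≤ ((k / 2 : ℕ) : ℝ) := by exact_mod_cast hm
  have hG : ((k / 2).factorial : ℝ) ≤ Real.Gamma (β * (k:ℝ) + 1) := by
    rw [← Real.Gamma_nat_eq_factorial]
    apply Real.Gamma_strictMonoOn_Ici.monotoneOn
    · simp only [Set.mem_Ici]; linarith
    · simp only [Set.mem_Ici]; linarith
    · linarith
  have hf : (0:ℝ) < ((k / 2).factorial : ℝ) := by positivity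
  rw [Real.norm_of_nonneg (div_nonneg (by positivity) (hf.le.trans hG))]
  gcongr

lemma mlE_differentiable (β : ℝ) (hβ : 1/2 < β) : Differentiable ℂ (mlE β) := by
  intro z
  have h := differentiableOn_tsum_of_summable_norm (U := Metric.ball (0:ℂ) (‖z‖ + 1))
    (F := fun (k : ℕ) (z : ℂ) => z ^ k / ((Real.Gamma (β * (k:ℝ) + 1) : ℝ) : ℂ))
    (ml_summable β hβ (‖z‖ + 1) (by positivity)) ?_ Metric.isOpen_ball ?_
  · have := h.differentiableAt (Metric.isOpen_ball.mem_nhds (x := z) (by simp))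
    exact this
  · intro k
    fun_prop
  · intro k w hw
    have hG : 0 < Real.Gamma (β * (k:ℝ) + 1) := Real.Gamma_pos_of_pos (by positivity)
    rw [norm_div, norm_pow, Complex.norm_real, Real.norm_of_nonneg hG.le]
    have : ‖w‖ ≤ ‖z‖ + 1 := by simpa using (mem_ball_zero_iff.mp hw).le
    gcongr

lemma half_bound (s α A B R : ℝ) (hs : 0 ≤ s) (hs1 : s < 1) (hα : 0 < α) (hR0 : 0 < R)
    (hA0 : 0 ≤ A) (hB0 : 0 ≤ B)
    (g g' : ℝ → ℂ) (hg : ∀ ξ, 0 < ξ → HasDerivAt g (g' ξ) ξ)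
    (hc : ContinuousOn g' (Set.Ioi 0)) (hA : ∀ ξ, 0 < ξ → ‖g ξ‖ ≤ A)
    (hB : ∀ ξ, 0 < ξ → ξ ≤ R → ‖g' ξ‖ ≤ B * (1 + ξ ^ (α - 1)))
    (hR : ∀ ξ, R ≤ ξ → g ξ = 0) (x : ℝ) (hx : x ≠ 0) :
    ‖∫ ξ in Set.Ioi (0:ℝ), ((ξ ^ (-s) : ℝ) : ℂ) * g ξ
      * Complex.exp (Complex.I * (x : ℂ) * (ξ : ℂ))‖
      ≤ (A / (1 - s) + (2 * A + B * (R + R ^ α / α))) * |x| ^ (s - 1) := by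
  set f : ℝ → ℂ := fun ξ => ((ξ ^ (-s) : ℝ) : ℂ) * g ξ
      * Complex.exp (Complex.I * (x : ℂ) * (ξ : ℂ)) with hf
  have hx0 : 0 < |x| := abs_pos.mpr hx
  have hexp : ∀ ξ : ℝ, ‖Complex.exp (Complex.I * (x : ℂ) * (ξ : ℂ))‖ = 1 := by
    intro ξ
    rw [show Complex.I * (x : ℂ) * (ξ : ℂ) = ((x * ξ : ℝ) : ℂ) * Complex.I by push_cast; ring]
    exact Complex.norm_exp_ofReal_mul_I _
  have hfb : ∀ ξ, 0 < ξ → ‖f ξ‖ ≤ A * ξ ^ (-s) := by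
    intro ξ hξ
    have : 0 ≤ ξ ^ (-s) := by positivity
    rw [hf]
    simp only [norm_mul, hexp, Complex.norm_real, Real.norm_of_nonneg this, mul_one]
    rw [mul_comm]
    exact mul_le_mul_of_nonneg_right (hA ξ hξ) this
  have hgc : ContinuousOn g (Set.Ioi 0) := fun ξ hξ => (hg ξ hξ).continuousAt.continuousWithinAt
  have hpc : ∀ p : ℝ, ContinuousOn (fun ξ : ℝ => ξ ^ p) (Set.Ioi 0) := fun p ξ hξ =>
    (Real.continuousAt_rpow_const ξ p (Or.inl (ne_of_gt hξ))).continuousWithinAt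
  have hec : Continuous (fun ξ : ℝ => Complex.exp (Complex.I * (x : ℂ) * (ξ : ℂ))) := by fun_prop
  have hfc : ContinuousOn f (Set.Ioi 0) :=
    ((Complex.continuous_ofReal.comp_continuousOn (hpc (-s))).mul hgc).mul hec.continuousOn
  have hint : ∀ a, 0 ≤ a → IntervalIntegrable f volume 0 a := by
    intro a ha
    refine IntervalIntegrable.mono_fun'
      ((intervalIntegral.intervalIntegrable_rpow' (r := -s) (by linarith)).const_mul A) ?_ ?_
    · rw [Set.uIoc_of_le ha]
      exact (hfc.mono Set.Ioc_subset_Ioi_self).aestronglyMeasurable measurableSet_Ioc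
    · rw [Set.uIoc_of_le ha]
      exact (ae_restrict_iff' measurableSet_Ioc).mpr
        (Filter.Eventually.of_forall fun ξ hξ => hfb ξ hξ.1)
  have hinner : ∀ a, 0 ≤ a → ‖∫ ξ in (0:ℝ)..a, f ξ‖ ≤ A / (1 - s) * a ^ (1 - s) := by
    intro a ha
    have h := intervalIntegral.norm_integral_le_of_norm_le (μ := volume) (f := f) ha
      (Filter.Eventually.of_forall fun ξ hξ => hfb ξ hξ.1)
      ((intervalIntegral.intervalIntegrable_rpow' (r := -s) (by linarith)).const_mul A)
    refine h.trans (le_of_eq ?_)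
    rw [intervalIntegral.integral_const_mul, integral_rpow (Or.inl (by linarith)),
      show -s + 1 = 1 - s by ring, Real.zero_rpow (by linarith)]
    ring
  have htot : ∫ ξ in Set.Ioi (0:ℝ), f ξ = ∫ ξ in (0:ℝ)..R, f ξ := by
    rw [intervalIntegral.integral_of_le hR0.le]
    refine setIntegral_eq_of_subset_of_forall_sdiff_eq_zero measurableSet_Ioi
      Set.Ioc_subset_Ioi_self ?_
    rintro ξ ⟨h1, h2⟩
    have : R ≤ ξ := by
      by_contra hcon
      exact h2 ⟨h1, (not_le.mp hcon).le⟩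
    simp [hf, hR ξ this]
  rw [htot]
  set r : ℝ := |x|⁻¹ with hr
  have hr0 : 0 < r := inv_pos.mpr hx0
  have hrp : r ^ (1 - s) = |x| ^ (s - 1) := by
    rw [hr, Real.inv_rpow hx0.le, ← Real.rpow_neg hx0.le]; congr 1; ring
  have hrp2 : |x|⁻¹ * r ^ (-s) = |x| ^ (s - 1) := by
    rw [← hrp, show 1 - s = 1 + -s by ring, Real.rpow_add hr0, Real.rpow_one]
  have hK : 0 ≤ 2 * A + B * (R + R ^ α / α) := by positivity
  have h1s : 0 < 1 - s := by linarith
  rcases le_or_gt R r with hRr | hrR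
  · refine (hinner R hR0.le).trans ?_
    have h1 : R ^ (1 - s) ≤ |x| ^ (s - 1) := by
      rw [← hrp]; exact Real.rpow_le_rpow hR0.le hRr h1s.le
    have h2 : 0 ≤ |x| ^ (s - 1) := by positivity
    have h3 : 0 ≤ A / (1 - s) := by positivity
    nlinarith [mul_le_mul_of_nonneg_left h1 h3, mul_nonneg hK h2]
  · have hfr : IntervalIntegrable f volume r R :=
      (hint r hr0.le).symm.trans (hint R hR0.le)
    rw [← intervalIntegral.integral_add_adjacent_intervals (hint r hr0.le) hfr]
    have hsub : Set.uIcc r R ⊆ Set.Ioi 0 := by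
      rw [Set.uIcc_of_le hrR.le]; intro ξ hξ; exact lt_of_lt_of_le hr0 hξ.1
    have houter : ‖∫ ξ in r..R, f ξ‖ ≤ (2 * A + B * (R + R ^ α / α)) * |x| ^ (s - 1) := by
      set u : ℝ → ℂ := fun ξ => ((ξ ^ (-s) : ℝ) : ℂ) * g ξ with hu
      set u' : ℝ → ℂ := fun ξ => ((-s * ξ ^ (-s - 1) : ℝ) : ℂ) * g ξ
        + ((ξ ^ (-s) : ℝ) : ℂ) * g' ξ with hu'
      set v : ℝ → ℂ := fun ξ => Complex.exp (Complex.I * (x : ℂ) * (ξ : ℂ))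
        / (Complex.I * (x : ℂ)) with hv
      have hIx : Complex.I * (x : ℂ) ≠ 0 :=
        mul_ne_zero Complex.I_ne_zero (Complex.ofReal_ne_zero.mpr hx)
      have hvn : ∀ ξ, ‖v ξ‖ = |x|⁻¹ := by
        intro ξ
        simp [hv, hexp ξ]
      have hud : ∀ ξ ∈ Set.uIcc r R, HasDerivAt u (u' ξ) ξ := by
        intro ξ hξ
        have h0 : 0 < ξ := hsub hξ
        exact (Real.hasDerivAt_rpow_const (Or.inl h0.ne')).ofReal_comp.mul (hg ξ h0)
      have hvd : ∀ ξ ∈ Set.uIcc r R, HasDerivAt v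
          (Complex.exp (Complex.I * (x : ℂ) * (ξ : ℂ))) ξ := by
        intro ξ hξ
        have h1 : HasDerivAt (fun y : ℝ => Complex.I * (x : ℂ) * (y : ℂ))
            (Complex.I * (x : ℂ)) ξ := by
          simpa using (hasDerivAt_id ξ).ofReal_comp.const_mul (Complex.I * (x : ℂ))
        have h2 := h1.cexp.div_const (Complex.I * (x : ℂ))
        rwa [mul_div_assoc, div_self hIx, mul_one] at h2
      have hu'c : ContinuousOn u' (Set.uIcc r R) := by
        refine ContinuousOn.mono ?_ hsub
        exact ((Complex.continuous_ofReal.comp_continuousOn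
          (continuousOn_const.mul (hpc (-s - 1)))).mul hgc).add
          ((Complex.continuous_ofReal.comp_continuousOn (hpc (-s))).mul hc)
      have hibp := intervalIntegral.integral_mul_deriv_eq_deriv_mul hud hvd
        hu'c.intervalIntegrable (hec.intervalIntegrable r R)
      have : ∫ ξ in r..R, f ξ = u R * v R - u r * v r - ∫ ξ in r..R, u' ξ * v ξ := hibp
      rw [this]
      have huR : u R = 0 := by simp [hu, hR R le_rfl]
      have hur : ‖u r * v r‖ ≤ A * |x| ^ (s - 1) := by
        have h1 : 0 ≤ r ^ (-s) := by positivity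
        rw [norm_mul, hvn, hu]
        simp only [norm_mul, Complex.norm_real, Real.norm_of_nonneg h1]
        rw [← hrp2]
        have h2 : 0 ≤ |x|⁻¹ := by positivity
        have := mul_le_mul_of_nonneg_left (hA r hr0) (mul_nonneg h2 h1)
        linarith
      set H : ℝ → ℝ := fun ξ => |x|⁻¹ * (-A * ξ ^ (-s) + r ^ (-s) * B * (ξ + ξ ^ α / α)) with hH
      set H' : ℝ → ℝ := fun ξ => |x|⁻¹ * (-A * (-s * ξ ^ (-s - 1))
        + r ^ (-s) * B * (1 + (α * ξ ^ (α - 1)) / α)) with hH'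
      have hHd : ∀ ξ ∈ Set.uIcc r R, HasDerivAt H (H' ξ) ξ := by
        intro ξ hξ
        have h0 : 0 < ξ := hsub hξ
        have h1 := (Real.hasDerivAt_rpow_const (x := ξ) (p := -s) (Or.inl h0.ne')).const_mul (-A)
        have h2 := (Real.hasDerivAt_rpow_const (x := ξ) (p := α) (Or.inl h0.ne')).div_const α
        exact (h1.add (((hasDerivAt_id ξ).add h2).const_mul (r ^ (-s) * B))).const_mul (|x|⁻¹)
      have hH'c : ContinuousOn H' (Set.uIcc r R) := by
        refine ContinuousOn.mono ?_ hsub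
        have h1 := hpc (-s - 1)
        have h2 := hpc (α - 1)
        exact continuousOn_const.mul ((continuousOn_const.mul (continuousOn_const.mul h1)).add
          (continuousOn_const.mul (continuousOn_const.add
            ((continuousOn_const.mul h2).div_const α))))
      have hI : ‖∫ ξ in r..R, u' ξ * v ξ‖ ≤ ∫ ξ in r..R, H' ξ := by
        refine intervalIntegral.norm_integral_le_of_norm_le hrR.le
          (Filter.Eventually.of_forall fun ξ hξ => ?_) hH'c.intervalIntegrable
        have h0 : 0 < ξ := hr0.trans hξ.1
        have hp1 : 0 ≤ ξ ^ (-s - 1) := by positivity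
        have hp2 : 0 ≤ ξ ^ (-s) := by positivity
        have hp3 : 0 ≤ ξ ^ (α - 1) := by positivity
        have hp4 : ξ ^ (-s) ≤ r ^ (-s) :=
          Real.rpow_le_rpow_of_nonpos hr0 hξ.1.le (by linarith)
        have e1 : ‖((-s * ξ ^ (-s - 1) : ℝ) : ℂ) * g ξ‖ ≤ s * ξ ^ (-s - 1) * A := by
          rw [norm_mul, Complex.norm_real, Real.norm_eq_abs, neg_mul, abs_neg,
            abs_of_nonneg (mul_nonneg hs hp1)]
          exact mul_le_mul_of_nonneg_left (hA ξ h0) (mul_nonneg hs hp1)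
        have e2 : ‖((ξ ^ (-s) : ℝ) : ℂ) * g' ξ‖ ≤ r ^ (-s) * (B * (1 + ξ ^ (α - 1))) := by
          rw [norm_mul, Complex.norm_real, Real.norm_of_nonneg hp2]
          exact mul_le_mul hp4 (hB ξ h0 hξ.2) (norm_nonneg _) (by positivity)
        have e3 : ‖u' ξ‖ ≤ s * ξ ^ (-s - 1) * A + r ^ (-s) * (B * (1 + ξ ^ (α - 1))) :=
          (norm_add_le _ _).trans (add_le_add e1 e2)
        rw [norm_mul, hvn, mul_comm, hH']
        simp only [mul_div_cancel_left₀ _ hα.ne']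
        refine mul_le_mul_of_nonneg_left (e3.trans (le_of_eq ?_)) (by positivity)
        ring
      rw [intervalIntegral.integral_eq_sub_of_hasDerivAt hHd hH'c.intervalIntegrable] at hI
      have hI2 : H R - H r ≤ (A + B * (R + R ^ α / α)) * |x| ^ (s - 1) := by
        rw [← hrp2, hH]
        have p1 : 0 ≤ R ^ (-s) := by positivity
        have p2 : 0 ≤ r ^ (-s) := by positivity
        have p3 : 0 ≤ r + r ^ α / α := by positivity
        have p4 : 0 ≤ |x|⁻¹ := by positivity
        have q1 := mul_nonneg p4 (mul_nonneg hA0 p1)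
        have q2 := mul_nonneg p4 (mul_nonneg (mul_nonneg p2 hB0) p3)
        simp only
        nlinarith
      rw [huR, zero_mul, zero_sub]
      refine (norm_sub_le _ _).trans ?_
      rw [norm_neg]
      linarith
    refine (norm_add_le _ _).trans ?_
    have := hinner r hr0.le
    rw [hrp] at this
    linarith

lemma half_ml (β α s R : ℝ) (hβ : 1/2 < β) (hα : 0 < α) (hs : 0 ≤ s) (hs1 : s < 1)
    (hR0 : 0 < R) (c : ℂ) (ψ : ℝ → ℝ) (hψ : ContDiff ℝ 1 ψ) (hR : ∀ ξ, R ≤ ξ → ψ ξ = 0) :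
    ∃ C : ℝ, 0 ≤ C ∧ ∀ x : ℝ, x ≠ 0 →
      ‖∫ ξ in Set.Ioi (0:ℝ), ((ξ ^ (-s) : ℝ) : ℂ) * (((ψ ξ : ℝ) : ℂ)
          * mlE β (c * ((ξ ^ α : ℝ) : ℂ)))
          * Complex.exp (Complex.I * (x : ℂ) * (ξ : ℂ))‖ ≤ C * |x| ^ (s - 1) := by
  have hE := mlE_differentiable β hβ
  have hE' : Continuous (deriv (mlE β)) :=
    (hE.contDiff (n := 1)).continuous_deriv le_rfl
  have hin : Continuous (fun ξ : ℝ => c * ((ξ ^ α : ℝ) : ℂ)) :=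
    continuous_const.mul (Complex.continuous_ofReal.comp (Real.continuous_rpow_const hα.le))
  have hψ' : Continuous (deriv ψ) := hψ.continuous_deriv le_rfl
  set g : ℝ → ℂ := fun ξ => ((ψ ξ : ℝ) : ℂ) * mlE β (c * ((ξ ^ α : ℝ) : ℂ)) with hgdef
  set P : ℝ → ℂ := fun ξ => ((deriv ψ ξ : ℝ) : ℂ) * mlE β (c * ((ξ ^ α : ℝ) : ℂ)) with hP
  set Q : ℝ → ℂ := fun ξ => ((ψ ξ : ℝ) : ℂ) *
    (deriv (mlE β) (c * ((ξ ^ α : ℝ) : ℂ)) * (c * (α : ℂ))) with hQ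
  have hgc : Continuous g :=
    (Complex.continuous_ofReal.comp hψ.continuous).mul (hE.continuous.comp hin)
  have hPc : Continuous P :=
    (Complex.continuous_ofReal.comp hψ').mul (hE.continuous.comp hin)
  have hQc : Continuous Q :=
    (Complex.continuous_ofReal.comp hψ.continuous).mul ((hE'.comp hin).mul continuous_const)
  obtain ⟨A, hA⟩ := (isCompact_Icc (a := (0:ℝ)) (b := R)).exists_bound_of_continuousOn
    hgc.continuousOn
  obtain ⟨B1, hB1⟩ := (isCompact_Icc (a := (0:ℝ)) (b := R)).exists_bound_of_continuousOn
    hPc.continuousOn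
  obtain ⟨B2, hB2⟩ := (isCompact_Icc (a := (0:ℝ)) (b := R)).exists_bound_of_continuousOn
    hQc.continuousOn
  have h0m : (0:ℝ) ∈ Set.Icc 0 R := ⟨le_rfl, hR0.le⟩
  have hA0 : 0 ≤ A := (norm_nonneg _).trans (hA 0 h0m)
  have hB10 : 0 ≤ B1 := (norm_nonneg _).trans (hB1 0 h0m)
  have hB20 : 0 ≤ B2 := (norm_nonneg _).trans (hB2 0 h0m)
  have hgR : ∀ ξ, R ≤ ξ → g ξ = 0 := by
    intro ξ hξ
    simp [hgdef, hR ξ hξ]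
  have h1s : 0 < 1 - s := by linarith
  refine ⟨A / (1 - s) + (2 * A + (B1 + B2) * (R + R ^ α / α)), by positivity, fun x hx => ?_⟩
  refine half_bound s α A (B1 + B2) R hs hs1 hα hR0 hA0 (by positivity) g
    (fun ξ => P ξ + Q ξ * ((ξ ^ (α - 1) : ℝ) : ℂ)) ?_ ?_ ?_ ?_ hgR x hx
  · intro ξ hξ
    have h1 : HasDerivAt (fun y : ℝ => c * ((y ^ α : ℝ) : ℂ))
        (c * ((α * ξ ^ (α - 1) : ℝ) : ℂ)) ξ :=
      (Real.hasDerivAt_rpow_const (Or.inl hξ.ne')).ofReal_comp.const_mul c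
    have h2 := HasDerivAt.comp ξ (hE (c * ((ξ ^ α : ℝ) : ℂ))).hasDerivAt h1
    have h3 := ((hψ.differentiable one_ne_zero) ξ).hasDerivAt.ofReal_comp.mul h2
    refine h3.congr_deriv ?_
    simp only [hP, hQ, Function.comp]
    push_cast
    ring
  · refine hPc.continuousOn.add (hQc.continuousOn.mul
      (Complex.continuous_ofReal.comp_continuousOn fun ξ hξ => ?_))
    exact (Real.continuousAt_rpow_const ξ _ (Or.inl (ne_of_gt hξ))).continuousWithinAt
  · intro ξ hξ
    rcases le_or_gt ξ R with h | h
    · exact hA ξ ⟨hξ.le, h⟩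
    · rw [hgR ξ h.le, norm_zero]; exact hA0
  · intro ξ hξ hξR
    have p : 0 ≤ ξ ^ (α - 1) := by positivity
    refine (norm_add_le _ _).trans ?_
    rw [norm_mul (Q ξ), Complex.norm_real (ξ ^ (α - 1)), Real.norm_of_nonneg p]
    have e1 := hB1 ξ ⟨hξ.le, hξR⟩
    have e2 := mul_le_mul_of_nonneg_right (hB2 ξ ⟨hξ.le, hξR⟩) p
    nlinarith [mul_nonneg hB10 p]

/-- Kernel decay for the low-frequency Mittag-Leffler kernel:
`𝒰₁(x) = ∫ |ξ|^{-s} χ(ξ) E_β(i^{-β}|ξ|^α) e^{ixξ} dξ` satisfies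
`|𝒰₁(x)| ≲_s |x|^{s-1}` for `x ≠ 0`, where `χ` is a smooth cutoff supported in
`{|ξ|^σ ≤ 2M}` and equal to `1` on `{|ξ|^σ ≤ M}`, `σ = α/β`. -/
theorem stmt18 (β α M s : ℝ) (hβ : β ∈ Set.Ioo (1/2 : ℝ) 1) (hα : 0 < α)
    (hM : 0 < M) (hs : 0 ≤ s) (hs1 : s < 1)
    (χ : ℝ → ℝ) (hχ : ContDiff ℝ (⊤ : ℕ∞) χ)
    (hsupp : ∀ ξ : ℝ, 2*M < |ξ| ^ (α/β) → χ ξ = 0)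
    (hone : ∀ ξ : ℝ, |ξ| ^ (α/β) ≤ M → χ ξ = 1) :
    ∃ C : ℝ, 0 < C ∧ ∀ x : ℝ, x ≠ 0 →
      ‖∫ ξ : ℝ, ((|ξ| ^ (-s) : ℝ) : ℂ) * ((χ ξ : ℝ) : ℂ)
          * mlE β (Complex.I ^ (-(β:ℂ)) * ((|ξ| ^ α : ℝ) : ℂ))
          * Complex.exp (Complex.I * (x : ℂ) * (ξ : ℂ))‖
        ≤ C * |x| ^ (s - 1) := by
  have hσ : 0 < α / β := div_pos hα (by linarith [hβ.1])
  set R : ℝ := (2 * M) ^ (α / β)⁻¹ + 1 with hRdef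
  have hR0 : 0 < R := by positivity
  have hbig : ∀ ξ : ℝ, R ≤ |ξ| → χ ξ = 0 := by
    intro ξ hξ
    apply hsupp
    have h1 : (2 * M) ^ (α / β)⁻¹ < |ξ| := by linarith
    have h2 := Real.rpow_lt_rpow (by positivity) h1 hσ
    rwa [Real.rpow_inv_rpow (by positivity) hσ.ne'] at h2
  have hχ1 : ContDiff ℝ 1 χ := hχ.of_le (by exact_mod_cast le_top)
  obtain ⟨C1, hC1, H1⟩ := half_ml β α s R hβ.1 hα hs hs1 hR0 (Complex.I ^ (-(β:ℂ))) χ hχ1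
    (fun ξ hξ => hbig ξ (hξ.trans (le_abs_self ξ)))
  obtain ⟨C2, hC2, H2⟩ := half_ml β α s R hβ.1 hα hs hs1 hR0 (Complex.I ^ (-(β:ℂ)))
    (fun ξ => χ (-ξ)) (hχ1.comp contDiff_neg)
    (fun ξ hξ => hbig (-ξ) (by rw [abs_neg]; exact hξ.trans (le_abs_self ξ)))
  refine ⟨C1 + C2 + 1, by positivity, fun x hx => ?_⟩
  have hxp : 0 ≤ |x| ^ (s - 1) := by positivity
  set f : ℝ → ℂ := fun ξ => ((|ξ| ^ (-s) : ℝ) : ℂ) * ((χ ξ : ℝ) : ℂ)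
          * mlE β (Complex.I ^ (-(β:ℂ)) * ((|ξ| ^ α : ℝ) : ℂ))
          * Complex.exp (Complex.I * (x : ℂ) * (ξ : ℂ)) with hf
  by_cases hi : Integrable f
  · have hsplit := intervalIntegral.integral_Iic_add_Ioi (b := (0:ℝ)) (f := f)
      hi.integrableOn hi.integrableOn
    have e1 : ‖∫ ξ in Set.Ioi (0:ℝ), f ξ‖ ≤ C1 * |x| ^ (s - 1) := by
      refine le_trans (le_of_eq ?_) (H1 x hx)
      congr 1
      refine setIntegral_congr_fun measurableSet_Ioi fun ξ hξ => ?_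
      simp only [hf, abs_of_pos (Set.mem_Ioi.mp hξ)]
      ring
    have e2 : ‖∫ ξ in Set.Iic (0:ℝ), f ξ‖ ≤ C2 * |x| ^ (s - 1) := by
      have h2 := H2 (-x) (neg_ne_zero.mpr hx)
      rw [abs_neg] at h2
      refine le_trans (le_of_eq ?_) h2
      congr 1
      have h3 := integral_comp_neg_Iic (0:ℝ) (fun ξ => f (-ξ))
      simp only [neg_neg, neg_zero] at h3
      rw [h3]
      refine setIntegral_congr_fun measurableSet_Ioi fun ξ hξ => ?_
      simp only [hf, abs_neg, abs_of_pos (Set.mem_Ioi.mp hξ)]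
      push_cast
      rw [show Complex.I * -(x:ℂ) * (ξ:ℂ) = Complex.I * (x:ℂ) * -(ξ:ℂ) by ring]
      ring
    rw [← hsplit]
    refine (norm_add_le _ _).trans ?_
    nlinarith
  · rw [integral_undef hi, norm_zero]
    positivity
end
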